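/- arXiv:1806.05460 — 2 statements merged into one kernel-verified Lean document; each statement's English description precedes it below -/
import Mathlib

section
/- Let c > 1, α ∈ (0,2)\{1}, and let θ be a smooth admissible function with respect to c and α with Fourier coefficients (c_k)_{k∈ℤ} and c̃ = 2πα/log c. Let f ∈ L¹(ℝ) be bounded. Then for every x ∈ ℝ, the Fourier transform of the Grünwald–Letnikov semi-fractional difference satisfies lim_{h ↓ 0} ∫_ℝ e^{ixy} (ₕΔ^α_{c,θ} f)(y) dy = ∑_{k∈ℤ} ω_k (−ix)^{α − i k c̃} f̂(x), where f̂(x) = ∫_ℝ e^{ixy} f(y) dy and complex powers are principal-branch with 0^z := 0 for Re z > 0. -/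
/-!
Formally, shifting `f` by `j h` multiplies its Fourier integral by `e^{i x j h}`, so the binomial
series turns the Fourier integral of the difference into
`∑ₖ ω_k ((1 - e^{ixh}) / h) ^ (α - i t_k) f̂(x)` with `t_k = k c̃`, and the base
`(1 - e^{ixh}) / h` tends to `-i x`. Three estimates make this rigorous.

* Interchanging the integral with both series needs `∑ₖ ∑ⱼ |ω_k C(α - i t_k, j)| < ∞`. Since
  `Γ(1 - α + it) C(α - it, j) (-1)^j = (it - α) Γ(j - α + it) / j!`, interpolating between
  `|Γ(s + it)| ≤ Γ(s)` and `|Γ(s + it)| ≤ Γ(s + 1) / |s + it|`, where `s = j - α`, bounds the modulus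
  by a constant times `(1 + |t|)^{1 - α/2} (j + 1)^{-1 - α/2}`
  (`exists_norm_Gamma_mul_gbinom_le`). This is summable against `|c_k| = O(k⁻²)`.
* The binomial series is needed at `e^{ixh}`, on the boundary of the unit disc; absolute convergence
  there and continuity of the power (its exponent has positive real part) allow the passage from
  radius `r < 1` to radius one (`tsum_gbinom_mul_pow`).
* The limit `h ↓ 0` is taken by dominated convergence over `k`. The base has nonnegative real part
  and modulus at most `|x|`, so the power is at most `|x|^α e^{π |t_k| / 2}`. The exponential is
  absorbed by the decay of `Γ(1 - α + i t_k)`: on the line `Re s = 1` the reflection formula gives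
  `|Γ(1 + it)|² = π |t| / sinh (π |t|)`, and a Beta integral transfers the decay to `Re s = 1 - α`
  (`exists_norm_Gamma_mul_exp_le`). What remains is `O(k^{-3/2})`.
-/

open MeasureTheory Real Filter Set Complex

noncomputable section

def IsAdmissible (c α : ℝ) (θ : ℝ → ℝ) : Prop :=
  (∀ x, 0 < θ x) ∧
  Function.Periodic θ (Real.log (c ^ (1 / α))) ∧
  ∀ y δ : ℝ, 0 ≤ δ → θ (y + δ) ≤ Real.exp (α * δ) * θ y

def IsSmoothAdmissible (c α : ℝ) (θ : ℝ → ℝ) (cfs : ℤ → ℂ) : Prop :=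
  IsAdmissible c α θ ∧ Continuous θ ∧
  (∀ k : ℤ, cfs (-k) = starRingEnd ℂ (cfs k)) ∧
  (∃ C > 0, ∀ k : ℤ, k ≠ 0 → ‖cfs k‖ ≤ C / (k : ℝ) ^ 2) ∧
  Summable (fun k : ℤ => ‖cfs k‖) ∧
  ∀ x : ℝ, HasSum
    (fun k : ℤ => cfs k * Complex.exp (Complex.I * (k : ℂ) * ((2 * Real.pi * α / Real.log c : ℝ) : ℂ) * (x : ℂ)))
    ((θ x : ℂ))

/-- Generalized binomial coefficient `C(z,j) = z(z-1)⋯(z-j+1)/j!`. -/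
def gbinom (z : ℂ) (j : ℕ) : ℂ := (∏ i ∈ Finset.range j, (z - (i : ℂ))) / (j.factorial : ℂ)

/-! ### Decay of the Gamma function on vertical lines -/

theorem norm_Gamma_le_re {s : ℂ} (hs : 0 < s.re) : ‖Complex.Gamma s‖ ≤ Real.Gamma s.re := by
  rw [Complex.Gamma_eq_integral hs, Real.Gamma_eq_integral hs, Complex.GammaIntegral]
  refine (norm_integral_le_integral_norm _).trans (le_of_eq ?_)
  refine setIntegral_congr_fun measurableSet_Ioi fun y hy => ?_
  simp only [norm_mul, Complex.norm_real, Real.norm_eq_abs, abs_of_pos (Real.exp_pos _)]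
  rw [Complex.norm_cpow_eq_rpow_re_of_pos hy]
  simp

/-- From the reflection formula, `|Γ(1 + it)|² = π |t| / sinh (π |t|)`. -/
theorem norm_Gamma_one_add_mul_I_sq (t : ℝ) :
    ‖Complex.Gamma (1 + t * I)‖ ^ 2 * Real.exp (Real.pi * |t|) ≤ 2 * Real.pi * |t| + 1 := by
  rcases eq_or_ne t 0 with rfl | ht
  · simp
  have htI : (t : ℂ) * I ≠ 0 := by simp [ht]
  have hconj : ‖Complex.Gamma (1 - t * I)‖ = ‖Complex.Gamma (1 + t * I)‖ := by
    have : (1 - t * I : ℂ) = (starRingEnd ℂ) (1 + t * I) := by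
      simp [sub_eq_add_neg]
    rw [this, Complex.Gamma_conj, Complex.norm_conj]
  have h1 : ‖Complex.Gamma (1 + t * I)‖ ^ 2 = |t| * (Real.pi / |Real.sinh (Real.pi * t)|) := by
    rw [sq]
    nth_rewrite 2 [← hconj]
    rw [add_comm, Complex.Gamma_add_one _ htI, norm_mul, mul_assoc, ← norm_mul,
      Complex.Gamma_mul_Gamma_one_sub, ← mul_assoc, Complex.sin_mul_I, ← Complex.ofReal_mul,
      ← Complex.ofReal_sinh]
    simp only [norm_mul, norm_div, Complex.norm_real, Complex.norm_I, mul_one, Real.norm_eq_abs,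
      abs_of_pos Real.pi_pos]
  have habs : |Real.sinh (Real.pi * t)| = Real.sinh (Real.pi * |t|) := by
    rw [Real.abs_sinh, abs_mul, abs_of_pos Real.pi_pos]
  have hy : 0 < Real.pi * |t| := by positivity
  set y := Real.pi * |t| with hydef
  have hs : y ≤ Real.sinh y := Real.self_le_sinh_iff.2 hy.le
  have hsp : 0 < Real.sinh y := hy.trans_le hs
  have hc : Real.cosh y ≤ 1 + Real.sinh y := by
    have := Real.cosh_sub_sinh y
    have h2 : Real.exp (-y) ≤ 1 := Real.exp_le_one_iff.2 (by linarith)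
    linarith
  rw [h1, habs, ← Real.cosh_add_sinh]
  have : |t| * (Real.pi / Real.sinh y) * (Real.cosh y + Real.sinh y)
      = y * (Real.cosh y + Real.sinh y) / Real.sinh y := by rw [hydef]; ring
  rw [this, div_le_iff₀ hsp]
  have : 2 * Real.pi * |t| = 2 * y := by rw [hydef]; ring
  rw [this]
  nlinarith

/-- Comparison along vertical lines: Euler's identity `Γ(s) Γ(1 - a) = Γ(s + 1 - a) B(s, 1 - a)`
for `s = a + it`, together with the fact that `|B(s, 1 - a)|` is bounded uniformly in `t`. -/
theorem exists_norm_Gamma_le_one_add {a : ℝ} (ha : 0 < a) (ha1 : a < 1) :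
    ∃ C : ℝ, 0 ≤ C ∧ ∀ t : ℝ,
      ‖Complex.Gamma (a + t * I)‖ ≤ C * ‖Complex.Gamma (1 + t * I)‖ := by
  set B : ℝ := ∫ y : ℝ in (0 : ℝ)..1,
    ‖(y : ℂ) ^ ((a : ℂ) - 1) * (1 - (y : ℂ)) ^ (((1 - a : ℝ) : ℂ) - 1)‖ with hB
  have hB0 : 0 ≤ B := intervalIntegral.integral_nonneg zero_le_one fun _ _ => norm_nonneg _
  have hG : 0 < Real.Gamma (1 - a) := Real.Gamma_pos_of_pos (by linarith)
  refine ⟨B / Real.Gamma (1 - a), by positivity, fun t => ?_⟩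
  have h := Complex.Gamma_mul_Gamma_eq_betaIntegral (s := a + t * I) (t := ((1 - a : ℝ) : ℂ))
    (by simpa using ha) (by rw [Complex.ofReal_re]; linarith)
  rw [Complex.Gamma_ofReal] at h
  have he : (a + t * I + ((1 - a : ℝ) : ℂ) : ℂ) = 1 + t * I := by push_cast; ring
  rw [he] at h
  have hbeta : ‖Complex.betaIntegral (a + t * I) ((1 - a : ℝ) : ℂ)‖ ≤ B := by
    refine (intervalIntegral.norm_integral_le_integral_norm zero_le_one).trans (le_of_eq ?_)
    rw [hB, intervalIntegral.integral_of_le zero_le_one, intervalIntegral.integral_of_le zero_le_one]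
    refine setIntegral_congr_fun measurableSet_Ioc fun y hy => ?_
    simp only [norm_mul]
    congr 1
    rw [Complex.norm_cpow_eq_rpow_re_of_pos hy.1, Complex.norm_cpow_eq_rpow_re_of_pos hy.1]
    simp
  have h2 := congrArg norm h
  rw [norm_mul, norm_mul, Complex.norm_real, Real.norm_eq_abs, abs_of_pos hG] at h2
  rw [div_mul_eq_mul_div, le_div_iff₀ hG, h2, mul_comm]
  gcongr

theorem mul_one_add_abs_le_norm {m a t : ℝ} (hm : 0 < m) (hm1 : m ≤ 1) (ha : m ≤ |a|) :
    m / 2 * (1 + |t|) ≤ ‖(a + t * I : ℂ)‖ := by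
  have h1 : |a| ≤ ‖(a + t * I : ℂ)‖ := by simpa using Complex.abs_re_le_norm (a + t * I : ℂ)
  have h2 : |t| ≤ ‖(a + t * I : ℂ)‖ := by simpa using Complex.abs_im_le_norm (a + t * I : ℂ)
  nlinarith [abs_nonneg t]

theorem add_mul_I_ne_zero {a t : ℝ} (ha : a ≠ 0) : (a + t * I : ℂ) ≠ 0 := by
  intro h
  exact ha (by simpa using congrArg Complex.re h)

/-- Exponential decay of `Γ` on the vertical line `Re s = 1 - α`. -/
theorem exists_norm_Gamma_mul_exp_le {α : ℝ} (hα : α ∈ Set.Ioo (0 : ℝ) 2) (hα1 : α ≠ 1) :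
    ∃ C : ℝ, 0 ≤ C ∧ ∀ t : ℝ,
      ‖Complex.Gamma (((1 - α : ℝ) : ℂ) + t * I)‖ * Real.exp (Real.pi / 2 * |t|)
        ≤ C * (1 + |t|) ^ (1 / 2 : ℝ) := by
  have key : ∃ C : ℝ, 0 ≤ C ∧ ∀ t : ℝ, ‖Complex.Gamma (((1 - α : ℝ) : ℂ) + t * I)‖
      ≤ C * ‖Complex.Gamma (1 + t * I)‖ := by
    rcases lt_or_gt_of_ne hα1 with h | h
    · exact exists_norm_Gamma_le_one_add (by linarith) (by linarith [hα.1])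
    · -- for `α > 1`, shift by one through the functional equation `Γ(s + 1) = s Γ(s)`
      obtain ⟨C, hC, hb⟩ := exists_norm_Gamma_le_one_add (a := 2 - α) (by linarith [hα.2])
        (by linarith)
      refine ⟨C / |1 - α|, by positivity, fun t => ?_⟩
      have ha : 0 < |1 - α| := abs_pos.2 (by linarith)
      have h1 := Complex.Gamma_add_one (((1 - α : ℝ) : ℂ) + t * I)
        (add_mul_I_ne_zero (by linarith))
      have h2 : (((1 - α : ℝ) : ℂ) + t * I + 1) = ((2 - α : ℝ) : ℂ) + t * I := by
        push_cast; ring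
      rw [h2] at h1
      have h3 := hb t
      rw [h1, norm_mul] at h3
      have h4 : |1 - α| ≤ ‖(((1 - α : ℝ) : ℂ) + t * I : ℂ)‖ := by
        simpa using Complex.abs_re_le_norm (((1 - α : ℝ) : ℂ) + t * I : ℂ)
      rw [div_mul_eq_mul_div, le_div_iff₀ ha]
      refine le_trans ?_ h3
      rw [mul_comm]
      gcongr
  obtain ⟨C, hC, hb⟩ := key
  refine ⟨C * (2 * Real.pi + 1) ^ (1 / 2 : ℝ), by positivity, fun t => ?_⟩
  have h1 : ‖Complex.Gamma (1 + t * I)‖ * Real.exp (Real.pi / 2 * |t|)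
      ≤ ((2 * Real.pi + 1) * (1 + |t|)) ^ (1 / 2 : ℝ) := by
    rw [← Real.sqrt_eq_rpow]
    apply Real.le_sqrt_of_sq_le
    rw [mul_pow, ← Real.exp_nat_mul]
    have := norm_Gamma_one_add_mul_I_sq t
    have e : ((2 : ℕ) : ℝ) * (Real.pi / 2 * |t|) = Real.pi * |t| := by push_cast; ring
    rw [e]
    nlinarith [abs_nonneg t, Real.pi_pos]
  rw [Real.mul_rpow (by positivity) (by positivity)] at h1
  calc _ ≤ C * ‖Complex.Gamma (1 + t * I)‖ * Real.exp (Real.pi / 2 * |t|) := by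
        gcongr; exact hb t
    _ ≤ _ := by
        rw [mul_assoc, mul_assoc]; gcongr

/-! ### Bounds for the weighted binomial coefficients -/

theorem gbinom_succ (z : ℂ) (j : ℕ) :
    gbinom z (j + 1) = gbinom z j * ((z - j) / (j + 1)) := by
  have h1 : ((j : ℂ) + 1) ≠ 0 := by exact_mod_cast Nat.succ_ne_zero j
  have h2 : (j.factorial : ℂ) ≠ 0 := by exact_mod_cast j.factorial_ne_zero
  unfold gbinom
  rw [Finset.prod_range_succ, Nat.factorial_succ]
  push_cast
  field_simp

/-- The Gamma factor of the weights cancels the one in the denominator of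
`C(-z, j) (-1)^j = Γ(z + j) / (Γ(z) j!)`. -/
theorem Gamma_mul_gbinom {z : ℂ} (hz : ∀ j : ℕ, z + j ≠ 0) (j : ℕ) :
    Complex.Gamma (z + 1) * gbinom (-z) j * (-1) ^ j
      = z * Complex.Gamma (z + j) / (j.factorial : ℂ) := by
  induction j with
  | zero =>
    have := hz 0
    simp only [Nat.cast_zero, add_zero] at this
    simp [gbinom, Complex.Gamma_add_one _ this]
  | succ j ih =>
    have h1 : ((j : ℂ) + 1) ≠ 0 := by exact_mod_cast Nat.succ_ne_zero j
    have h2 : (j.factorial : ℂ) ≠ 0 := by exact_mod_cast j.factorial_ne_zero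
    have h3 := Complex.Gamma_add_one _ (hz j)
    rw [gbinom_succ, Nat.factorial_succ]
    push_cast
    rw [← add_assoc, h3, pow_succ]
    have : Complex.Gamma (z + 1) * (gbinom (-z) j * ((-z - j) / (j + 1))) * ((-1) ^ j * -1)
        = (Complex.Gamma (z + 1) * gbinom (-z) j * (-1) ^ j) * ((z + j) / (j + 1)) := by ring
    rw [this, ih]
    field_simp

theorem norm_Gamma_mul_gbinom {α t : ℝ} (hα : ∀ j : ℕ, α ≠ j) (j : ℕ) :
    ‖Complex.Gamma (((1 - α : ℝ) : ℂ) + t * I)‖ * ‖gbinom ((α : ℂ) - t * I) j‖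
      = ‖((-α : ℝ) : ℂ) + t * I‖ * ‖Complex.Gamma (((j - α : ℝ) : ℂ) + t * I)‖ / j.factorial := by
  have h := Gamma_mul_gbinom (z := ((-α : ℝ) : ℂ) + t * I) (fun j => by
    have := add_mul_I_ne_zero (a := -α + j) (t := t) (fun h => hα j (by linarith))
    convert this using 1
    push_cast; ring) j
  have h2 := congrArg norm h
  have e1 : ((-α : ℝ) : ℂ) + t * I + 1 = ((1 - α : ℝ) : ℂ) + t * I := by push_cast; ring
  have e2 : -(((-α : ℝ) : ℂ) + t * I) = (α : ℂ) - t * I := by push_cast; ring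
  have e3 : ((-α : ℝ) : ℂ) + t * I + j = ((j - α : ℝ) : ℂ) + t * I := by push_cast; ring
  rw [e1, e2, e3] at h2
  simpa using h2

/-- `Γ(j - α) / j!` decays like `j ^ (-1 - α)`: by Bernoulli's inequality the ratio of consecutive
terms, `1 - (1 + α) / (j + 1)`, is at most `(j / (j + 1)) ^ (1 + α)`. -/
theorem exists_Gamma_sub_div_factorial_le {α : ℝ} (hα : α ∈ Set.Ioo (0 : ℝ) 2) :
    ∃ C : ℝ, 0 ≤ C ∧ ∀ j : ℕ, 2 ≤ j →
      Real.Gamma (j - α) / j.factorial ≤ C * (j : ℝ) ^ (-(1 + α)) := by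
  have hG : 0 < Real.Gamma (2 - α) := Real.Gamma_pos_of_pos (by linarith [hα.2])
  refine ⟨Real.Gamma (2 - α) / 2 * 2 ^ (1 + α), by positivity, fun j hj => ?_⟩
  induction j, hj using Nat.le_induction with
  | base =>
    rw [mul_assoc, Nat.cast_ofNat, ← Real.rpow_add (by norm_num)]
    simp
  | succ j hj ih =>
    have hj' : (2 : ℝ) ≤ j := by exact_mod_cast hj
    have hpos : 0 < (j : ℝ) - α := by linarith [hα.2]
    have e : (((j + 1 : ℕ) : ℝ) - α) = (j - α) + 1 := by push_cast; ring
    rw [e, Real.Gamma_add_one hpos.ne', Nat.factorial_succ]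
    have hf : (0 : ℝ) < j.factorial := by exact_mod_cast j.factorial_pos
    have hG' : 0 < Real.Gamma (j - α) := Real.Gamma_pos_of_pos hpos
    push_cast
    have hb : ((j : ℝ) - α) / (j + 1) ≤ ((j : ℝ) / (j + 1)) ^ (1 + α) := by
      have := one_add_mul_self_le_rpow_one_add (s := -1 / ((j : ℝ) + 1)) (p := 1 + α)
        (by rw [le_div_iff₀ (by positivity)]; linarith) (by linarith [hα.1])
      have e1 : 1 + -1 / ((j : ℝ) + 1) = j / (j + 1) := by field_simp; ring
      have e2 : 1 + (1 + α) * (-1 / ((j : ℝ) + 1)) = (j - α) / (j + 1) := by field_simp; ring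
      rwa [e1, e2] at this
    have hj0 : (0 : ℝ) < j := by linarith
    calc ((j : ℝ) - α) * Real.Gamma (j - α) / ((j + 1) * j.factorial)
        = (((j : ℝ) - α) / (j + 1)) * (Real.Gamma (j - α) / j.factorial) := by
          field_simp
      _ ≤ ((j : ℝ) / (j + 1)) ^ (1 + α)
            * (Real.Gamma (2 - α) / 2 * 2 ^ (1 + α) * (j : ℝ) ^ (-(1 + α))) := by
          gcongr
      _ = _ := by
          rw [Real.div_rpow hj0.le (by positivity), Real.rpow_neg hj0.le,
            Real.rpow_neg (by positivity)]
          have : (j : ℝ) ^ (1 + α) ≠ 0 := (Real.rpow_pos_of_pos hj0 _).ne'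
          field_simp

/-- Interpolation between `|Γ(s + it)| ≤ Γ(s)` and `|Γ(s + it)| ≤ Γ(s + 1) / |s + it|`. -/
theorem norm_Gamma_le_interp {m s t ε : ℝ} (hm : 0 < m) (hm1 : m ≤ 1) (hs : m ≤ s)
    (hε : 0 ≤ ε) (hε1 : ε ≤ 1) :
    ‖Complex.Gamma (s + t * I)‖ ≤ Real.Gamma s * (2 * s / (m * (1 + |t|))) ^ ε := by
  have hs0 : 0 < s := hm.trans_le hs
  have hG := Real.Gamma_pos_of_pos hs0
  have hT : 0 < 1 + |t| := by positivity
  set q := 2 * s / (m * (1 + |t|)) with hq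
  have hq0 : 0 < q := by positivity
  rcases le_total 1 q with h | h
  · have h1 := norm_Gamma_le_re (s := s + t * I) (by simpa using hs0)
    have h2 : (s + t * I : ℂ).re = s := by simp
    rw [h2] at h1
    exact h1.trans (le_mul_of_one_le_right hG.le (Real.one_le_rpow h hε))
  · have h1 := norm_Gamma_le_re (s := s + t * I + 1) (by
      simp; linarith)
    have h2 : (s + t * I + 1 : ℂ).re = s + 1 := by simp
    rw [h2, Complex.Gamma_add_one _ (add_mul_I_ne_zero hs0.ne'), Real.Gamma_add_one hs0.ne',
      norm_mul] at h1
    have h3 := mul_one_add_abs_le_norm (t := t) hm hm1 (hs.trans (le_abs_self s))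
    have h4 : ‖Complex.Gamma (s + t * I)‖ ≤ Real.Gamma s * q := by
      have h5 : m / 2 * (1 + |t|) * ‖Complex.Gamma (s + t * I)‖ ≤ s * Real.Gamma s :=
        (mul_le_mul_of_nonneg_right h3 (norm_nonneg _)).trans h1
      rw [hq, mul_div_assoc', le_div_iff₀ (by positivity)]
      nlinarith
    have h6 : q ≤ q ^ ε := by
      simpa using Real.rpow_le_rpow_of_exponent_ge hq0 h hε1
    exact h4.trans (by gcongr)

/-- The weighted binomial coefficients are dominated by a product `a(t) u(j)`, with growth in `t`
of order strictly less than one and `u` summable. -/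
theorem exists_norm_Gamma_mul_gbinom_le {α : ℝ} (hα : α ∈ Set.Ioo (0 : ℝ) 2) (hα1 : α ≠ 1) :
    ∃ C : ℝ, 0 ≤ C ∧ ∀ (t : ℝ) (j : ℕ),
      ‖Complex.Gamma (((1 - α : ℝ) : ℂ) + t * I)‖ * ‖gbinom ((α : ℂ) - t * I) j‖
        ≤ C * (1 + |t|) ^ (1 - α / 2) * ((j : ℝ) + 1) ^ (-(1 + α / 2)) := by
  obtain ⟨h0, h2⟩ := hα
  have hαj : ∀ j : ℕ, α ≠ j := by
    intro j hj
    rw [hj] at h0 h2 hα1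
    have : j < 2 := by exact_mod_cast h2
    interval_cases j <;> simp at h0 hα1
  have hz : ∀ t : ℝ, ‖((-α : ℝ) : ℂ) + t * I‖ ≤ 2 * (1 + |t|) := fun t => by
    refine (norm_add_le _ _).trans ?_
    simp only [norm_mul, Complex.norm_real, Complex.norm_I, mul_one, Real.norm_eq_abs, abs_neg,
      abs_of_pos h0]
    nlinarith [abs_nonneg t]
  have hbig : ∃ C : ℝ, 0 ≤ C ∧ ∀ (t : ℝ) (j : ℕ), 2 ≤ j →
      ‖Complex.Gamma (((1 - α : ℝ) : ℂ) + t * I)‖ * ‖gbinom ((α : ℂ) - t * I) j‖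
        ≤ C * (1 + |t|) ^ (1 - α / 2) * ((j : ℝ) + 1) ^ (-(1 + α / 2)) := by
    obtain ⟨C, hC, hb⟩ := exists_Gamma_sub_div_factorial_le ⟨h0, h2⟩
    set m := min 1 (2 - α) with hmdef
    have hm : 0 < m := lt_min one_pos (by linarith)
    refine ⟨2 * (C * (2 / m) ^ (α / 2) * 2 ^ (1 + α / 2)), by positivity, fun t j hj => ?_⟩
    have hj' : (2 : ℝ) ≤ j := by exact_mod_cast hj
    have hj0 : (0 : ℝ) < j := by linarith
    have hs : m ≤ j - α := (min_le_right _ _).trans (by linarith)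
    have hs0 : 0 < (j : ℝ) - α := hm.trans_le hs
    have hT : 0 < 1 + |t| := by positivity
    have hf : (0 : ℝ) < j.factorial := by exact_mod_cast j.factorial_pos
    have h1 := norm_Gamma_le_interp (t := t) hm (min_le_left _ _) hs (ε := α / 2)
      (by linarith) (by linarith)
    have hGp := Real.Gamma_pos_of_pos hs0
    rw [norm_Gamma_mul_gbinom hαj, mul_div_assoc]
    calc _ ≤ 2 * (1 + |t|) * (Real.Gamma (j - α) * (2 * j / (m * (1 + |t|))) ^ (α / 2)
              / j.factorial) := by
          gcongr
          · exact hz t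
          · refine h1.trans ?_
            gcongr
            linarith
      _ = 2 * (1 + |t|) * ((Real.Gamma (j - α) / j.factorial)
            * (2 * j / (m * (1 + |t|))) ^ (α / 2)) := by ring
      _ ≤ 2 * (1 + |t|) * ((C * (j : ℝ) ^ (-(1 + α))) * (2 * j / (m * (1 + |t|))) ^ (α / 2)) := by
          gcongr
          exact hb j hj
      _ = 2 * (C * (2 / m) ^ (α / 2)) * ((1 + |t|) ^ (1 - α / 2)) * (j : ℝ) ^ (-(1 + α / 2)) := by
          have e1 : 2 * (j : ℝ) / (m * (1 + |t|)) = (2 / m) * (j / (1 + |t|)) := by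
            field_simp
          have e2 : -(1 + α / 2) = -(1 + α) + α / 2 := by ring
          rw [e1, Real.mul_rpow (by positivity) (by positivity),
            Real.div_rpow hj0.le hT.le, e2, Real.rpow_add hj0, Real.rpow_sub hT, Real.rpow_one]
          ring
      _ ≤ 2 * (C * (2 / m) ^ (α / 2)) * ((1 + |t|) ^ (1 - α / 2))
            * (2 ^ (1 + α / 2) * ((j : ℝ) + 1) ^ (-(1 + α / 2))) := by
          gcongr
          rw [Real.rpow_neg hj0.le, Real.rpow_neg (by positivity), ← div_eq_mul_inv,
            ← Real.div_rpow (by positivity) (by positivity),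
            ← Real.inv_rpow hj0.le]
          apply Real.rpow_le_rpow (by positivity) _ (by linarith)
          rw [inv_eq_one_div, div_le_div_iff₀ hj0 (by positivity)]
          linarith
      _ = _ := by ring
  have hsmall : ∃ C : ℝ, 0 ≤ C ∧ ∀ (t : ℝ) (j : ℕ), j < 2 →
      ‖Complex.Gamma (((1 - α : ℝ) : ℂ) + t * I)‖ * ‖gbinom ((α : ℂ) - t * I) j‖
        ≤ C * (1 + |t|) ^ (1 - α / 2) * ((j : ℝ) + 1) ^ (-(1 + α / 2)) := by
    set m := min 1 |1 - α| with hmdef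
    have hm : 0 < m := lt_min one_pos (abs_pos.2 fun h => hα1 (by linarith))
    have hG2 : 0 < Real.Gamma (2 - α) := Real.Gamma_pos_of_pos (by linarith)
    set D := 2 / m * Real.Gamma (2 - α) with hD
    have hD0 : 0 < D := by positivity
    have hGam : ∀ t : ℝ, ‖Complex.Gamma (((1 - α : ℝ) : ℂ) + t * I)‖ * (1 + |t|) ≤ D := fun t => by
      have h1 := norm_Gamma_le_re (s := ((2 - α : ℝ) : ℂ) + t * I) (by simp; linarith)
      have e2 : (((2 - α : ℝ) : ℂ) + t * I).re = 2 - α := by simp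
      have e1 : ((2 - α : ℝ) : ℂ) + t * I = (((1 - α : ℝ) : ℂ) + t * I) + 1 := by push_cast; ring
      rw [e2, e1, Complex.Gamma_add_one _ (add_mul_I_ne_zero fun h => hα1 (by linarith)),
        norm_mul] at h1
      have h3 := mul_one_add_abs_le_norm (t := t) hm (min_le_left _ _)
        (min_le_right 1 |1 - α|)
      have h4 := (mul_le_mul_of_nonneg_right h3 (norm_nonneg _)).trans h1
      rw [hD, div_mul_eq_mul_div, le_div_iff₀ hm]
      nlinarith
    refine ⟨2 * D * 2 ^ (1 + α / 2), by positivity, fun t j hj => ?_⟩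
    have hT : 1 ≤ 1 + |t| := by linarith [abs_nonneg t]
    have hTp : 1 ≤ (1 + |t|) ^ (1 - α / 2) := Real.one_le_rpow hT (by linarith)
    have hg : ‖gbinom ((α : ℂ) - t * I) j‖ ≤ 2 * (1 + |t|) := by
      interval_cases j
      · simp [gbinom]; linarith
      · have : gbinom ((α : ℂ) - t * I) 1 = -(((-α : ℝ) : ℂ) + t * I) := by
          simp [gbinom]; ring
        rw [this, norm_neg]
        exact hz t
    have hj2 : (1 : ℝ) ≤ 2 ^ (1 + α / 2) * ((j : ℝ) + 1) ^ (-(1 + α / 2)) := by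
      rw [Real.rpow_neg (by positivity), ← div_eq_mul_inv,
        ← Real.div_rpow (by positivity) (by positivity)]
      apply Real.one_le_rpow _ (by linarith)
      rw [le_div_iff₀ (by positivity)]
      have : (j : ℝ) ≤ 1 := by exact_mod_cast Nat.lt_succ_iff.1 hj
      linarith
    calc _ ≤ ‖Complex.Gamma (((1 - α : ℝ) : ℂ) + t * I)‖ * (2 * (1 + |t|)) := by gcongr
      _ = 2 * (‖Complex.Gamma (((1 - α : ℝ) : ℂ) + t * I)‖ * (1 + |t|)) := by ring
      _ ≤ 2 * D * 1 * 1 := by linarith [hGam t]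
      _ ≤ 2 * D * (1 + |t|) ^ (1 - α / 2)
            * (2 ^ (1 + α / 2) * ((j : ℝ) + 1) ^ (-(1 + α / 2))) := by gcongr
      _ = _ := by ring
  obtain ⟨C₁, hC₁, hb₁⟩ := hbig
  obtain ⟨C₂, hC₂, hb₂⟩ := hsmall
  refine ⟨C₁ + C₂, by positivity, fun t j => ?_⟩
  have hp : 0 ≤ (1 + |t|) ^ (1 - α / 2) * ((j : ℝ) + 1) ^ (-(1 + α / 2)) := by positivity
  rcases le_or_gt 2 j with hj | hj
  · nlinarith [hb₁ t j hj]
  · nlinarith [hb₂ t j hj]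

/-! ### The binomial series on the closed unit disc -/

theorem gbinom_eq_choose (z : ℂ) (j : ℕ) : gbinom z j = Ring.choose z j := by
  have h : ∀ n : ℕ, (descPochhammer ℤ n).smeval z = ∏ i ∈ Finset.range n, (z - (i : ℂ)) := by
    intro n
    induction n with
    | zero => simp
    | succ n ih =>
      rw [Finset.prod_range_succ, ← ih]
      simp [descPochhammer_succ_right, Polynomial.smeval_mul, Polynomial.smeval_natCast]
  have h1 := Ring.descPochhammer_eq_factorial_smul_choose z j
  have h2 : (j.factorial : ℂ) ≠ 0 := by exact_mod_cast j.factorial_ne_zero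
  rw [gbinom, ← h, h1, nsmul_eq_mul, mul_div_cancel_left₀ _ h2]

/-- The binomial series on the closed unit disc, obtained from the open disc by letting the radius
tend to one (Abel's argument, with absolute convergence on the boundary). -/
theorem tsum_gbinom_mul_pow {z w : ℂ} (hz : 0 < z.re) (hs : Summable fun j => ‖gbinom z j‖)
    (hw : ‖w‖ ≤ 1) :
    ∑' j : ℕ, gbinom z j * (-1) ^ j * w ^ j = (1 - w) ^ z := by
  have hre : 0 ≤ (1 - w).re := by
    have := (Complex.re_le_norm w).trans hw
    simp; linarith
  have hin : ∀ r : ℝ, r ∈ Set.Ioo (0 : ℝ) 1 →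
      ∑' j : ℕ, gbinom z j * (-1) ^ j * (r * w) ^ j = (1 - r * w) ^ z := by
    intro r hr
    have hlt : ‖-((r : ℂ) * w)‖ < 1 := by
      rw [norm_neg, norm_mul, Complex.norm_real, Real.norm_eq_abs, abs_of_pos hr.1]
      nlinarith [hr.1, hr.2, norm_nonneg w]
    have h := (Complex.one_add_cpow_hasFPowerSeriesOnBall_zero (a := z)).hasSum
      (y := -((r : ℂ) * w)) (by
        rw [Metric.mem_eball, edist_zero_right, ← ofReal_norm]
        exact ENNReal.ofReal_lt_one.2 hlt)
    rw [zero_add, ← sub_eq_add_neg] at h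
    rw [← h.tsum_eq]
    refine tsum_congr fun j => ?_
    rw [binomialSeries_apply, gbinom_eq_choose]
    simp only [List.ofFn_const, List.prod_replicate, smul_eq_mul]
    rw [neg_pow ((r : ℂ) * w) j, mul_assoc]
  have hl1 : Tendsto (fun r : ℝ => ∑' j : ℕ, gbinom z j * (-1) ^ j * (r * w) ^ j)
      (nhdsWithin 1 (Set.Ioo 0 1)) (nhds (∑' j : ℕ, gbinom z j * (-1) ^ j * w ^ j)) := by
    refine tendsto_tsum_of_dominated_convergence hs (fun j => ?_) ?_
    · have : Continuous fun r : ℝ => gbinom z j * (-1) ^ j * ((r : ℂ) * w) ^ j := by fun_prop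
      have h := this.tendsto 1
      simp only [Complex.ofReal_one, one_mul] at h
      exact h.mono_left nhdsWithin_le_nhds
    · filter_upwards [self_mem_nhdsWithin] with r hr j
      have hle : ‖(r : ℂ) * w‖ ≤ 1 := by
        rw [norm_mul, Complex.norm_real, Real.norm_eq_abs, abs_of_pos hr.1]
        nlinarith [hr.1, hr.2, norm_nonneg w]
      have := pow_le_one₀ (n := j) (norm_nonneg _) hle
      simp only [norm_mul, norm_pow, norm_neg, norm_one, one_pow, mul_one] at this ⊢
      exact mul_le_of_le_one_right (norm_nonneg _) this
  have hl2 : Tendsto (fun r : ℝ => (1 - (r : ℂ) * w) ^ z)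
      (nhdsWithin 1 (Set.Ioo 0 1)) (nhds ((1 - w) ^ z)) := by
    have hc := Complex.continuousAt_cpow_of_re_pos (p := (1 - w, z)) (Or.inl hre) hz
    have hg : Tendsto (fun r : ℝ => ((1 - (r : ℂ) * w, z) : ℂ × ℂ)) (nhds 1)
        (nhds (1 - w, z)) := by
      have : Continuous fun r : ℝ => ((1 - (r : ℂ) * w, z) : ℂ × ℂ) := by fun_prop
      simpa using this.tendsto 1
    exact (hc.tendsto.comp hg).mono_left nhdsWithin_le_nhds
  have hne : (nhdsWithin (1 : ℝ) (Set.Ioo 0 1)).NeBot := by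
    rw [nhdsWithin_Ioo_eq_nhdsLT one_pos]
    infer_instance
  refine tendsto_nhds_unique (hl1.congr' ?_) hl2
  filter_upwards [self_mem_nhdsWithin] with r hr using hin r hr

/-! ### Fourier integrals of shifted series -/

theorem cpow_neg_mul_cpow {h : ℝ} (hh : 0 < h) (w : ℂ) {z : ℂ} (hz : z ≠ 0) :
    (h : ℂ) ^ (-z) * w ^ z = (w / h) ^ z := by
  rcases eq_or_ne w 0 with rfl | hw
  · simp [hz]
  have hh' : (h : ℂ) ≠ 0 := by exact_mod_cast hh.ne'
  have e : w / h = ((h⁻¹ : ℝ) : ℂ) * w := by push_cast; field_simp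
  rw [e, Complex.cpow_def_of_ne_zero hh', Complex.cpow_def_of_ne_zero hw,
    Complex.cpow_def_of_ne_zero (mul_ne_zero (by exact_mod_cast (inv_pos.2 hh).ne') hw),
    Complex.log_ofReal_mul (inv_pos.2 hh) hw, ← Complex.exp_add, Real.log_inv,
    Complex.ofReal_neg, Complex.ofReal_log hh.le]
  congr 1
  ring

theorem integral_exp_mul_sub (f : ℝ → ℝ) (x s : ℝ) :
    ∫ y : ℝ, Complex.exp (Complex.I * x * y) * ((f (y - s) : ℝ) : ℂ)
      = Complex.exp (Complex.I * x * s)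
        * ∫ y : ℝ, Complex.exp (Complex.I * x * y) * ((f y : ℝ) : ℂ) := by
  rw [← integral_sub_right_eq_self
    (fun y : ℝ => Complex.exp (Complex.I * x * y) * ((f y : ℝ) : ℂ)) s, ← integral_const_mul]
  refine integral_congr_ae (Filter.Eventually.of_forall fun y => ?_)
  simp only
  rw [← mul_assoc, ← Complex.exp_add]
  congr 2
  push_cast
  ring

theorem integrable_exp_mul_sub {f : ℝ → ℝ} (hf : Integrable f) (x s : ℝ) :
    Integrable fun y : ℝ => Complex.exp (Complex.I * x * y) * ((f (y - s) : ℝ) : ℂ) := by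
  refine (hf.comp_sub_right s).ofReal.bdd_mul (c := 1) ?_ (Filter.Eventually.of_forall fun y => ?_)
  · exact Continuous.aestronglyMeasurable (by fun_prop)
  · have : Complex.I * x * y = ((x * y : ℝ) : ℂ) * Complex.I := by push_cast; ring
    rw [this, Complex.norm_exp_ofReal_mul_I]

theorem norm_exp_mul (x y : ℝ) (v : ℂ) : ‖Complex.exp (Complex.I * x * y) * v‖ = ‖v‖ := by
  have : Complex.I * x * y = ((x * y : ℝ) : ℂ) * Complex.I := by push_cast; ring
  rw [norm_mul, this, Complex.norm_exp_ofReal_mul_I, one_mul]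

/-- Since `|c_k| = O(k⁻²)`, weights of growth order `β < 1` keep the Fourier coefficients
summable. -/
theorem summable_coeff_mul_rpow {cfs : ℤ → ℂ} {C b β : ℝ}
    (hC : ∀ k : ℤ, k ≠ 0 → ‖cfs k‖ ≤ C / (k : ℝ) ^ 2) (hβ0 : 0 ≤ β) (hβ : β < 1) :
    Summable fun k : ℤ => ‖cfs k‖ * (1 + |(k : ℝ) * b|) ^ β := by
  have hs := (Real.summable_abs_int_rpow (b := 2 - β) (by linarith)).mul_left
    (C * (1 + |b|) ^ β)
  refine Summable.of_norm_bounded_eventually hs ?_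
  have : {k : ℤ | k ≠ 0} ∈ (Filter.cofinite : Filter ℤ) := by
    rw [Filter.mem_cofinite]
    convert Set.finite_singleton (0 : ℤ)
    ext k; simp
  filter_upwards [this] with k hk
  have hk1 : (1 : ℝ) ≤ |(k : ℝ)| := by
    rw [← Int.cast_abs]; exact_mod_cast Int.one_le_abs hk
  have hk0 : 0 < |(k : ℝ)| := by linarith
  rw [Real.norm_of_nonneg (by positivity)]
  have h1 : (1 + |(k : ℝ) * b|) ^ β ≤ (1 + |b|) ^ β * |(k : ℝ)| ^ β := by
    rw [← Real.mul_rpow (by positivity) (by positivity)]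
    apply Real.rpow_le_rpow (by positivity) _ hβ0
    rw [abs_mul]
    nlinarith [abs_nonneg b]
  have h2 : ‖cfs k‖ ≤ C / |(k : ℝ)| ^ 2 := by rw [sq_abs]; exact hC k hk
  have e : -(2 - β) = β - 2 := by ring
  calc _ ≤ C / |(k : ℝ)| ^ 2 * ((1 + |b|) ^ β * |(k : ℝ)| ^ β) :=
        mul_le_mul h2 h1 (by positivity) ((norm_nonneg _).trans h2)
    _ = _ := by
        rw [e, Real.rpow_sub hk0, Real.rpow_two]
        ring

/-- Integrating a shifted series term by term: with `∑ |a (k, j)| < ∞`, the Fourier integral of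
`∑ₖ ∑ⱼ a (k, j) f(y - j h)` is the double series of `a (k, j) e^{i x j h}` times the Fourier
integral of `f`. Boundedness of `f` turns the iterated series into an unconditional one at
every point. -/
theorem integral_exp_mul_tsum_tsum {f : ℝ → ℝ} {M : ℝ} (hM : ∀ y, |f y| ≤ M) (hf : Integrable f)
    {a : ℤ → ℕ → ℂ} (ha : Summable fun p : ℤ × ℕ => ‖a p.1 p.2‖) (x h : ℝ) :
    ∫ y : ℝ, Complex.exp (Complex.I * x * y) * ∑' k : ℤ, ∑' j : ℕ, a k j * ((f (y - j * h) : ℝ) : ℂ)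
      = (∑' k : ℤ, ∑' j : ℕ, a k j * Complex.exp (Complex.I * x * h) ^ j)
        * ∫ y : ℝ, Complex.exp (Complex.I * x * y) * ((f y : ℝ) : ℂ) := by
  set fhat := ∫ y : ℝ, Complex.exp (Complex.I * x * y) * ((f y : ℝ) : ℂ) with hfhat
  let F : ℤ × ℕ → ℝ → ℂ := fun p y =>
    a p.1 p.2 * (Complex.exp (Complex.I * x * y) * ((f (y - p.2 * h) : ℝ) : ℂ))
  have hFint : ∀ p, Integrable (F p) := fun p =>
    (integrable_exp_mul_sub hf x (p.2 * h)).const_mul _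
  have hFnorm : ∀ p y, ‖F p y‖ = ‖a p.1 p.2‖ * |f (y - p.2 * h)| := fun p y => by
    simp only [F]
    rw [norm_mul, norm_exp_mul, Complex.norm_real, Real.norm_eq_abs]
  have hFsum : Summable fun p => ∫ y, ‖F p y‖ := by
    have : (fun p => ∫ y, ‖F p y‖) = fun p : ℤ × ℕ => ‖a p.1 p.2‖ * ∫ y, |f y| := by
      funext p
      simp only [hFnorm]
      rw [integral_const_mul, integral_sub_right_eq_self (fun y => |f y|)]
    rw [this]
    exact ha.mul_right _
  have hpt : ∀ y, ∑' p, F p y = Complex.exp (Complex.I * x * y)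
      * ∑' k : ℤ, ∑' j : ℕ, a k j * ((f (y - j * h) : ℝ) : ℂ) := by
    intro y
    have hsy : Summable fun p => F p y := by
      refine Summable.of_norm_bounded (ha.mul_right M) fun p => ?_
      rw [hFnorm]
      gcongr
      exact hM _
    rw [hsy.tsum_prod, ← tsum_mul_left]
    refine tsum_congr fun k => ?_
    rw [← tsum_mul_left]
    refine tsum_congr fun j => ?_
    simp only [F]
    ring
  have hsum := (hasSum_integral_of_summable_integral_norm hFint hFsum).tsum_eq
  simp only [hpt] at hsum
  rw [← hsum]
  have hval : ∀ p, ∫ y, F p y = (a p.1 p.2 * Complex.exp (Complex.I * x * h) ^ p.2) * fhat := by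
    intro p
    have h1 := integral_exp_mul_sub f x (p.2 * h)
    simp only [F]
    have e : Complex.I * x * ((p.2 * h : ℝ) : ℂ) = p.2 * (Complex.I * x * h) := by
      push_cast; ring
    rw [integral_const_mul, h1, ← hfhat, ← Complex.exp_nat_mul, e]
    ring
  simp only [hval]
  rw [tsum_mul_right]
  congr 1
  have hs2 : Summable fun p : ℤ × ℕ => a p.1 p.2 * Complex.exp (Complex.I * x * h) ^ p.2 := by
    refine Summable.of_norm_bounded ha fun p => ?_
    have : Complex.I * x * h = ((x * h : ℝ) : ℂ) * Complex.I := by push_cast; ring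
    rw [norm_mul, norm_pow, this, Complex.norm_exp_ofReal_mul_I, one_pow, mul_one]
  exact hs2.tsum_prod

/-! ### The limit -/

theorem stmt13 (c α : ℝ) (hc : 1 < c) (hα : α ∈ Set.Ioo (0 : ℝ) 2) (hα1 : α ≠ 1)
    (θ : ℝ → ℝ) (cfs : ℤ → ℂ) (hθ : IsSmoothAdmissible c α θ cfs)
    (ctil : ℝ) (hctil : ctil = 2 * Real.pi * α / Real.log c)
    (ω : ℤ → ℂ)
    (hω : ∀ k : ℤ, ω k = (if α < 1 then 1 else -1) *
      (cfs k * Complex.Gamma (Complex.I * (k : ℂ) * (ctil : ℂ) - (α : ℂ) + 1)))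
    (f : ℝ → ℝ) (hfb : ∃ M : ℝ, ∀ y, |f y| ≤ M) (hfi : Integrable f)
    (GLd : ℝ → ℝ → ℂ)
    (hGLd : ∀ h > (0 : ℝ), ∀ y : ℝ, GLd h y =
      ∑' k : ℤ, ω k * ((h : ℂ)) ^ (Complex.I * (k : ℂ) * (ctil : ℂ) - (α : ℂ)) *
        ∑' j : ℕ, gbinom ((α : ℂ) - Complex.I * (k : ℂ) * (ctil : ℂ)) j * (-1 : ℂ) ^ j *
          ((f (y - j * h) : ℝ) : ℂ))
    (x : ℝ) :
    Tendsto (fun h : ℝ => ∫ y : ℝ, Complex.exp (Complex.I * (x : ℂ) * (y : ℂ)) * GLd h y)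
      (nhdsWithin 0 (Set.Ioi 0))
      (nhds ((∑' k : ℤ,
          ω k * (-Complex.I * (x : ℂ)) ^ ((α : ℂ) - Complex.I * (k : ℂ) * (ctil : ℂ))) *
        ∫ y : ℝ, Complex.exp (Complex.I * (x : ℂ) * (y : ℂ)) * ((f y : ℝ) : ℂ))) := by
  obtain ⟨-, -, -, ⟨C, -, hC⟩, -, -⟩ := hθ
  obtain ⟨M, hM⟩ := hfb
  obtain ⟨h0, h2⟩ := hα
  have hωnorm : ∀ k : ℤ, ‖ω k‖ = ‖cfs k‖
      * ‖Complex.Gamma (((1 - α : ℝ) : ℂ) + ((k * ctil : ℝ) : ℂ) * I)‖ := fun k => by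
    have e : Complex.I * (k : ℂ) * (ctil : ℂ) - (α : ℂ) + 1
        = ((1 - α : ℝ) : ℂ) + ((k * ctil : ℝ) : ℂ) * I := by push_cast; ring
    rw [hω, e]
    split_ifs <;> simp
  have hze : ∀ k : ℤ, (α : ℂ) - Complex.I * (k : ℂ) * (ctil : ℂ)
      = (α : ℂ) - ((k * ctil : ℝ) : ℂ) * I := fun k => by push_cast; ring
  have hzre : ∀ k : ℤ, ((α : ℂ) - ((k * ctil : ℝ) : ℂ) * I).re = α := fun k => by simp
  have hzim : ∀ k : ℤ, ((α : ℂ) - ((k * ctil : ℝ) : ℂ) * I).im = -(k * ctil) := fun k => by simp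
  have hz0 : ∀ k : ℤ, (α : ℂ) - ((k * ctil : ℝ) : ℂ) * I ≠ 0 := fun k h => by
    have := hzre k
    rw [h] at this
    simp at this
    linarith
  have hneg : ∀ k : ℤ, Complex.I * (k : ℂ) * (ctil : ℂ) - (α : ℂ)
      = -((α : ℂ) - ((k * ctil : ℝ) : ℂ) * I) := fun k => by push_cast; ring
  simp only [hze, hneg] at hGLd ⊢
  set z : ℤ → ℂ := fun k => (α : ℂ) - ((k * ctil : ℝ) : ℂ) * I with hzdef
  change ∀ k, (z k).re = α at hzre
  change ∀ k, (z k).im = _ at hzim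
  change ∀ k, z k ≠ 0 at hz0
  obtain ⟨K, hK, hbin⟩ := exists_norm_Gamma_mul_gbinom_le ⟨h0, h2⟩ hα1
  obtain ⟨L, hL, hexp⟩ := exists_norm_Gamma_mul_exp_le ⟨h0, h2⟩ hα1
  have hu : Summable fun j : ℕ => ((j : ℝ) + 1) ^ (-(1 + α / 2)) := by
    have := (summable_nat_add_iff 1).2
      (Real.summable_nat_rpow (p := -(1 + α / 2)).2 (by linarith))
    simpa using this
  have hv := summable_coeff_mul_rpow (b := ctil) (β := 1 - α / 2) hC (by linarith) (by linarith)
  have hωbin : Summable fun p : ℤ × ℕ => ‖ω p.1‖ * ‖gbinom (z p.1) p.2‖ := by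
    have := (hv.mul_of_nonneg hu (fun k => by positivity) (fun j => by positivity)).mul_left K
    refine Summable.of_nonneg_of_le (fun p => by positivity) (fun p => ?_) this
    rw [hωnorm, mul_assoc]
    have hb := hbin (p.1 * ctil) p.2
    calc _ ≤ ‖cfs p.1‖ * _ := mul_le_mul_of_nonneg_left hb (norm_nonneg _)
      _ = _ := by ring
  have hgs : ∀ k : ℤ, Summable fun j => ‖gbinom (z k) j‖ := fun k => by
    have hG : 0 < ‖Complex.Gamma (((1 - α : ℝ) : ℂ) + ((k * ctil : ℝ) : ℂ) * I)‖ := by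
      refine norm_pos_iff.2 (Complex.Gamma_ne_zero fun m hm => ?_)
      have hre := congrArg Complex.re hm
      simp at hre
      have hm1 : (m : ℝ) = α - 1 := by linarith
      have hm2 : (m : ℝ) < 1 := by linarith
      have hm3 : m = 0 := by
        have : m < 1 := by exact_mod_cast hm2
        omega
      rw [hm3] at hm1
      exact hα1 (by simp at hm1; linarith)
    refine (summable_mul_left_iff hG.ne').1 ?_
    exact Summable.of_nonneg_of_le (fun j => by positivity) (fun j => hbin _ j) (hu.mul_left _)
  -- the Fourier integral for a fixed step `h`, in closed form through the binomial series
  have hFT : ∀ h > (0 : ℝ), ∫ y : ℝ, Complex.exp (Complex.I * (x : ℂ) * (y : ℂ)) * GLd h y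
      = (∑' k : ℤ, ω k * ((1 - Complex.exp (Complex.I * x * h)) / h) ^ z k)
        * ∫ y : ℝ, Complex.exp (Complex.I * (x : ℂ) * (y : ℂ)) * ((f y : ℝ) : ℂ) := by
    intro h hh
    have hnorm : ‖Complex.exp (Complex.I * x * h)‖ ≤ 1 := by
      have := norm_exp_mul x h 1
      rw [mul_one, norm_one] at this
      exact this.le
    let a : ℤ → ℕ → ℂ := fun k j => ω k * (h : ℂ) ^ (-z k) * (gbinom (z k) j * (-1) ^ j)
    have ha : Summable fun p : ℤ × ℕ => ‖a p.1 p.2‖ := by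
      refine (hωbin.mul_right (h ^ (-α))).congr fun p => ?_
      simp only [a, norm_mul, norm_pow, norm_neg, norm_one, one_pow, mul_one]
      rw [Complex.norm_cpow_eq_rpow_re_of_pos hh, Complex.neg_re, hzre]
      ring
    have hrw : ∀ y, GLd h y = ∑' k : ℤ, ∑' j : ℕ, a k j * ((f (y - j * h) : ℝ) : ℂ) := by
      intro y
      rw [hGLd h hh y]
      refine tsum_congr fun k => ?_
      rw [← tsum_mul_left]
      refine tsum_congr fun j => ?_
      simp only [a]
      ring
    simp only [hrw]
    rw [integral_exp_mul_tsum_tsum hM hfi ha x h]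
    congr 1
    refine tsum_congr fun k => ?_
    rw [← cpow_neg_mul_cpow hh _ (hz0 k),
      ← tsum_gbinom_mul_pow (by rw [hzre]; exact h0) (hgs k) hnorm, ← mul_assoc, ← tsum_mul_left]
    refine tsum_congr fun j => ?_
    simp only [a]
    ring
  refine Tendsto.congr' (f₁ := fun h : ℝ =>
    (∑' k : ℤ, ω k * ((1 - Complex.exp (Complex.I * x * h)) / h) ^ z k)
        * ∫ y : ℝ, Complex.exp (Complex.I * (x : ℂ) * (y : ℂ)) * ((f y : ℝ) : ℂ)) ?_ ?_
  · filter_upwards [self_mem_nhdsWithin] with h hh using (hFT h hh).symm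
  refine Tendsto.mul_const _ ?_
  have hlim : Tendsto (fun h : ℝ => (1 - Complex.exp (Complex.I * x * h)) / h)
      (nhdsWithin 0 (Set.Ioi 0)) (nhds (-Complex.I * x)) := by
    have hd : HasDerivAt (fun h : ℝ => -Complex.exp (Complex.I * x * h)) (-Complex.I * x) 0 := by
      have h1 : HasDerivAt (fun h : ℂ => -Complex.exp (Complex.I * x * h)) (-Complex.I * x)
          ((0 : ℝ) : ℂ) := by
        have := (((hasDerivAt_id' ((0 : ℝ) : ℂ)).const_mul (Complex.I * x)).cexp).neg
        exact this.congr_deriv (by simp)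
      exact h1.comp_ofReal
    have := hd.tendsto_slope_zero_right
    refine this.congr fun h => ?_
    simp only [zero_add, Complex.ofReal_zero, mul_zero, Complex.exp_zero, Complex.real_smul,
      Complex.ofReal_inv]
    ring
  -- dominated convergence: the angle of the base is at most `π / 2`, which the decay of `Γ` absorbs
  have hw := (summable_coeff_mul_rpow (b := ctil) (β := 1 / 2) hC (by norm_num)
    (by norm_num)).mul_left (L * |x| ^ α)
  refine tendsto_tsum_of_dominated_convergence hw (fun k => ?_) ?_
  · refine Tendsto.const_mul _ ?_
    have hc := Complex.continuousAt_cpow_of_re_pos (p := (-Complex.I * x, z k))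
      (Or.inl (by simp)) (by simpa [hzre] using h0)
    exact hc.tendsto.comp (hlim.prodMk_nhds tendsto_const_nhds)
  · filter_upwards [self_mem_nhdsWithin] with h hh k
    have hh : 0 < h := hh
    set q : ℂ := (1 - Complex.exp (Complex.I * x * h)) / h with hq
    have he : Complex.I * x * h = Complex.I * ((x * h : ℝ) : ℂ) := by push_cast; ring
    have hqx : ‖q‖ ≤ |x| := by
      rw [hq, norm_div, Complex.norm_real, Real.norm_eq_abs, abs_of_pos hh, div_le_iff₀ hh,
        norm_sub_rev, he]
      refine (Real.norm_exp_I_mul_ofReal_sub_one_le).trans (le_of_eq ?_)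
      rw [Real.norm_eq_abs, abs_mul, abs_of_pos hh]
    have hqre : 0 ≤ q.re := by
      rw [hq, Complex.div_ofReal_re]
      refine div_nonneg ?_ hh.le
      have := Complex.re_le_norm (Complex.exp (Complex.I * x * h))
      have h1 := norm_exp_mul x h 1
      rw [mul_one, norm_one] at h1
      simp only [Complex.sub_re, Complex.one_re]
      linarith
    have hcp : ‖q ^ z k‖ ≤ |x| ^ α * Real.exp (Real.pi / 2 * |(k : ℝ) * ctil|) := by
      rcases eq_or_ne q 0 with hq0 | hq0
      · rw [hq0, Complex.zero_cpow (hz0 k), norm_zero]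
        positivity
      · rw [Complex.norm_cpow_of_ne_zero hq0, hzre, hzim, div_eq_mul_inv, ← Real.exp_neg]
        have harg := Complex.abs_arg_le_pi_div_two_iff.2 hqre
        gcongr
        calc _ ≤ |Complex.arg q * ((k : ℝ) * ctil)| := by
              rw [mul_neg, neg_neg]; exact le_abs_self _
          _ ≤ _ := by rw [abs_mul]; gcongr
    rw [norm_mul, hωnorm]
    calc _ ≤ ‖cfs k‖ * ‖Complex.Gamma (((1 - α : ℝ) : ℂ) + ((k * ctil : ℝ) : ℂ) * I)‖
            * (|x| ^ α * Real.exp (Real.pi / 2 * |(k : ℝ) * ctil|)) := by gcongr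
      _ = ‖cfs k‖ * |x| ^ α
            * (‖Complex.Gamma (((1 - α : ℝ) : ℂ) + ((k * ctil : ℝ) : ℂ) * I)‖
              * Real.exp (Real.pi / 2 * |(k : ℝ) * ctil|)) := by ring
      _ ≤ ‖cfs k‖ * |x| ^ α * (L * (1 + |(k : ℝ) * ctil|) ^ (1 / 2 : ℝ)) := by
          exact mul_le_mul_of_nonneg_left (hexp _) (by positivity)
      _ = _ := by ring
end
end

section
/- Let c > 1, α ∈ (0,2)\{1}, and let θ be a smooth admissible function with respect to c and α with Fourier coefficients (c_k)_{k∈ℤ} and c̃ = 2πα/log c, and let φ₁ be the measure on (0,∞) with φ₁((r,∞)) = r^{−α} θ(log r) for all r > 0. Let f ∈ L¹(ℝ) be bounded, suppose all derivatives of f up to an integer order n > α + 1 exist and f^{(n)} ∈ L¹(ℝ). Then for almost every x ∈ ℝ: lim_{h ↓ 0} ₕΔ^α_{c,θ} f(x) = ∫₀^∞ (f(x) − f(x−y)) dφ₁(y) if α ∈ (0,1), and lim_{h ↓ 0} ₕΔ^α_{c,θ} f(x) = ∫₀^∞ (f(x−y) − f(x) + y f′(x)) dφ₁(y) if α ∈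 (1,2). -/
/-!
The proof rests on a Poisson representation of the Grünwald–Letnikov difference. Write
`z_k = α - i k c̃` and `p_t(j) = e^{-t} t^j / j!`. Integrating by parts (`layer_cake`), inserting
the Fourier series of `θ` and using the Mellin transform of `p_t(j)` (`mellin_pois`) gives

`∫ p_{y/h}(j) dφ₁(y) = ∑_k c_k h^{-z_k} z_k Γ(j - z_k) / j!`  for `j > α`,

which is `hasSum_integral_pois`. Up to the sign in `ω_k`, the right-hand side is the coefficient of
`f(x - j h)` in the difference (`gamma_mul_gbinom`). The weights `Γ(j - z) / j!` sum to zero, and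
for `1 < α` they also annihilate `j` (`hasSum_gamma_zero`, `hasSum_gamma_one`), so an affine
function of `j` may be subtracted from `f(x - j h)` to make the terms with `j < α` vanish
(`gl_mode_lt`, `gl_mode_gt`). Hence, for every `h > 0` and every `x`,

`ₕΔ^α f(x) = ∫ ∑_j p_{y/h}(j) a_h(j) dφ₁(y)`,

with `a_h(j) = f(x) - f(x - j h)` if `α < 1`, and
`a_h(j) = f(x - j h) - f(x) + j (f(x) - f(x - h))` if `1 < α`. Exchanging the sums over `j` and `k`
with the integral (`integral_pois_tsum`) needs absolute summability of the double series. The bound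
`c_k = O(k^{-2})` alone does not suffice, because of the factor `z_k`; the missing power of `k`
comes from the vertical decay of the Gamma function (`norm_gamma_le`).

As `h ↓ 0`, the Poisson mean in the integrand converges to the integrand of the generator form
(`szasz_tendsto`), and Taylor's estimates dominate it by a multiple of `min(1, y)`, respectively
`min(y, y²)`, for which `φ₁`-integrable majorants are provided by `exists_majorant_lt` and
`exists_majorant_gt`. Dominated convergence concludes, at every point `x`.
-/

open MeasureTheory Real Filter Set Complex

noncomputable section

/-! ### Poisson weights -/

/-- The Poisson weight `e^{-t} t^j / j!`. -/
def pois (t : ℝ) (j : ℕ) : ℝ := Real.exp (-t) * t ^ j / (j.factorial : ℝ)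

lemma pois_nonneg {t : ℝ} (ht : 0 ≤ t) (j : ℕ) : 0 ≤ pois t j := by
  unfold pois; positivity

lemma pois_hasSum (t : ℝ) : HasSum (pois t) 1 := by
  have h := NormedSpace.expSeries_div_hasSum_exp (𝔸 := ℝ) t
  rw [← Real.exp_eq_exp_ℝ] at h
  have h2 := h.mul_left (Real.exp (-t))
  rw [← Real.exp_add, neg_add_cancel, Real.exp_zero] at h2
  convert! h2 using 1
  ext j; simp [pois, mul_div_assoc]

lemma pois_succ (t : ℝ) (j : ℕ) : ((j : ℝ) + 1) * pois t (j + 1) = t * pois t j := by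
  unfold pois
  rw [Nat.factorial_succ]
  have : (j.factorial : ℝ) ≠ 0 := by positivity
  push_cast
  field_simp
  ring

lemma pois_hasSum_one (t : ℝ) : HasSum (fun j : ℕ => (j : ℝ) * pois t j) t := by
  rw [← hasSum_nat_add_iff' 1]
  simpa [pois_succ] using (pois_hasSum t).mul_left t

lemma pois_hasSum_two (t : ℝ) :
    HasSum (fun j : ℕ => (j : ℝ) * ((j : ℝ) - 1) * pois t j) (t ^ 2) := by
  rw [← hasSum_nat_add_iff' 1]
  have h := (pois_hasSum_one t).mul_left t
  convert! h using 1
  · ext j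
    push_cast
    have := pois_succ t j
    linear_combination (j : ℝ) * this
  · simp [pow_two]

/-- The variance of `h N`, with `N` Poisson of mean `y / h`, is `h y`. -/
lemma pois_variance {h : ℝ} (hh : 0 < h) (y : ℝ) :
    HasSum (fun j : ℕ => (j * h - y) ^ 2 * pois (y / h) j) (h * y) := by
  have h0 := (pois_hasSum (y / h)).mul_left (y ^ 2)
  have h1 := (pois_hasSum_one (y / h)).mul_left (h ^ 2 - 2 * h * y)
  have h2 := (pois_hasSum_two (y / h)).mul_left (h ^ 2)
  convert! (h0.add h1).add h2 using 1
  · ext j; ring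
  · field_simp; ring

/-! ### Estimates for the Gamma function -/

/-- Euler's limit formula yields `Γ(j - α) / j! = O(j^{-1-α})`. -/
lemma gamma_ratio_bound {α : ℝ} (hα0 : 0 < α) (hα : ∀ j : ℕ, α ≠ j) :
    ∃ C : ℝ, 0 ≤ C ∧ ∀ j : ℕ, |Real.Gamma ((j : ℝ) - α)| / (j.factorial : ℝ) ≤
      C * ((j : ℝ) + 1) ^ (-1 - α) := by
  have hne : ∀ i : ℕ, -α + (i : ℝ) ≠ 0 := fun i hi => hα i (by linarith)
  have hG0 : Real.Gamma (-α) ≠ 0 :=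
    Real.Gamma_ne_zero fun m hm => hα m (by linarith)
  have hprod : ∀ n : ℕ, Real.Gamma ((n : ℝ) - α) =
      (∏ i ∈ Finset.range n, (-α + (i : ℝ))) * Real.Gamma (-α) := by
    intro n
    induction n with
    | zero => simp
    | succ n ih =>
      rw [Finset.prod_range_succ, mul_right_comm, ← ih]
      have := Real.Gamma_add_one (hne n)
      rw [show -α + (n : ℝ) = n - α by ring] at this ⊢
      rw [mul_comm, ← this]
      push_cast; ring_nf
  have hlim : Tendsto (fun n => Real.Gamma (-α) / Real.GammaSeq (-α) n) atTop (nhds 1) := by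
    have := (tendsto_const_nhds (x := Real.Gamma (-α))).div (Real.GammaSeq_tendsto_Gamma (-α)) hG0
    rwa [div_self hG0] at this
  obtain ⟨C₀, hC₀⟩ := hlim.abs.bddAbove_range
  have hC₀' : ∀ n, |Real.Gamma (-α) / Real.GammaSeq (-α) n| ≤ C₀ := fun n => hC₀ ⟨n, rfl⟩
  have hC0 : 0 ≤ C₀ := (abs_nonneg _).trans (hC₀' 0)
  refine ⟨|Real.Gamma (-α)| + |Real.Gamma (1 - α)| * 2 ^ (1 + α) + C₀ * 3 ^ (1 + α),
    by positivity, fun j => ?_⟩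
  have hj : (0 : ℝ) < (j : ℝ) + 1 := by positivity
  rw [show (-1 - α) = -(1 + α) by ring, Real.rpow_neg hj.le, ← div_eq_mul_inv,
    le_div_iff₀ (by positivity)]
  have p1 : 0 ≤ |Real.Gamma (-α)| := abs_nonneg _
  have p2 : 0 ≤ |Real.Gamma (1 - α)| * (2 : ℝ) ^ (1 + α) := by positivity
  have p3 : 0 ≤ C₀ * (3 : ℝ) ^ (1 + α) := by positivity
  rcases j with _ | _ | n
  · simp; linarith
  · norm_num; linarith
  · -- here `Γ(n + 2 - α)` is compared with `GammaSeq (-α) (n + 1)`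
    set N : ℕ := n + 1 with hN
    have hNpos : (0 : ℝ) < N := by positivity
    have hN1 : (1 : ℝ) ≤ N := by rw [hN]; push_cast; linarith [(Nat.cast_nonneg n : (0 : ℝ) ≤ n)]
    have hPne : (∏ i ∈ Finset.range (N + 1), (-α + (i : ℝ))) ≠ 0 :=
      Finset.prod_ne_zero_iff.2 fun i _ => hne i
    have e1 : Real.Gamma (((N + 1 : ℕ) : ℝ) - α) =
        Real.Gamma (-α) / Real.GammaSeq (-α) N * ((N : ℝ) ^ (-α) * N.factorial) := by
      rw [hprod, Real.GammaSeq]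
      have : (N : ℝ) ^ (-α) ≠ 0 := (Real.rpow_pos_of_pos hNpos _).ne'
      have : (N.factorial : ℝ) ≠ 0 := by positivity
      field_simp
    rw [e1, abs_mul, abs_of_pos (by positivity : 0 < (N : ℝ) ^ (-α) * N.factorial)]
    have e2 : ((N : ℝ) ^ (-α) * N.factorial) / ((N + 1).factorial : ℝ)
        * (((N + 1 : ℕ) : ℝ) + 1) ^ (1 + α) ≤ 3 ^ (1 + α) := by
      rw [Nat.factorial_succ N]
      have hf : (N.factorial : ℝ) ≠ 0 := by positivity
      have : (((N + 1 : ℕ) : ℝ) + 1) ^ (1 + α) ≤ 3 ^ (1 + α) * ((N : ℝ) * (N : ℝ) ^ α) := by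
        rw [← Real.rpow_one_add' hNpos.le (by linarith), ← Real.mul_rpow (by norm_num) hNpos.le]
        apply Real.rpow_le_rpow (by positivity) _ (by linarith)
        push_cast; linarith
      calc _ ≤ ((N : ℝ) ^ (-α) * N.factorial) / (((N + 1) * N.factorial : ℕ) : ℝ)
          * (3 ^ (1 + α) * ((N : ℝ) * (N : ℝ) ^ α)) := by gcongr
        _ = 3 ^ (1 + α) * (N / (N + 1)) := by
          rw [Real.rpow_neg hNpos.le]
          have : (N : ℝ) ^ α ≠ 0 := (Real.rpow_pos_of_pos hNpos _).ne'
          push_cast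
          field_simp
        _ ≤ 3 ^ (1 + α) * 1 := by
          gcongr
          rw [div_le_one (by positivity)]; linarith
        _ = _ := mul_one _
    calc _ = |Real.Gamma (-α) / Real.GammaSeq (-α) N| *
          (((N : ℝ) ^ (-α) * N.factorial) / ((N + 1).factorial : ℝ)
        * (((N + 1 : ℕ) : ℝ) + 1) ^ (1 + α)) := by ring
      _ ≤ C₀ * 3 ^ (1 + α) := by
        have := hC₀' N
        gcongr
      _ ≤ _ := by linarith

/-- Vertical decay of the Gamma function, interpolated between `|Γ(s + iβ)| ≤ Γ(s)` and
`|s + iβ| |Γ(s + iβ)| ≤ Γ(s + 1)`. -/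
lemma norm_gamma_le {s : ℝ} (hs : 0 < s) (β : ℝ) {ε : ℝ} (h0 : 0 ≤ ε) (h1 : ε ≤ 1) :
    ‖Complex.Gamma ((s : ℂ) + Complex.I * β)‖ ≤
      Real.Gamma s * ((1 + s) / (1 + |β|)) ^ ε := by
  have key : ∀ s : ℝ, 0 < s → ‖Complex.Gamma ((s : ℂ) + Complex.I * β)‖ ≤ Real.Gamma s := by
    intro s hs
    rw [Complex.Gamma_eq_integral (by simpa using hs), Real.Gamma_eq_integral hs,
      Complex.GammaIntegral]
    refine (norm_integral_le_integral_norm _).trans (le_of_eq ?_)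
    refine setIntegral_congr_fun measurableSet_Ioi fun x hx => ?_
    simp only [mem_Ioi] at hx
    rw [norm_mul, Complex.norm_real, Complex.norm_cpow_eq_rpow_re_of_pos hx]
    simp
  have hG := Real.Gamma_pos_of_pos hs
  set q := ‖Complex.Gamma ((s : ℂ) + Complex.I * β)‖ / Real.Gamma s with hq
  have hq0 : 0 ≤ q := by positivity
  have hq1 : q ≤ 1 := by rw [hq, div_le_one hG]; exact key s hs
  have hne : (s : ℂ) + Complex.I * β ≠ 0 := by
    intro h
    have := congrArg Complex.re h
    simp at this; linarith
  have hβ : |β| ≤ ‖(s : ℂ) + Complex.I * β‖ := by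
    have := Complex.abs_im_le_norm ((s : ℂ) + Complex.I * β)
    simpa using this
  have h2 : ‖(s : ℂ) + Complex.I * β‖ * ‖Complex.Gamma ((s : ℂ) + Complex.I * β)‖
      ≤ s * Real.Gamma s := by
    rw [← norm_mul, ← Complex.Gamma_add_one _ hne, ← Real.Gamma_add_one hs.ne']
    have := key (s + 1) (by linarith)
    convert this using 3
    push_cast; ring
  have h3 : |β| * q ≤ s := by
    rw [hq, ← mul_div_assoc, div_le_iff₀ hG]
    exact (mul_le_mul_of_nonneg_right hβ (norm_nonneg _)).trans h2
  have h4 : q ≤ (1 + s) / (1 + |β|) := by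
    rw [le_div_iff₀ (by positivity)]
    nlinarith
  have h5 : q ≤ ((1 + s) / (1 + |β|)) ^ ε := by
    calc q = q ^ (1 : ℝ) := (Real.rpow_one q).symm
      _ ≤ q ^ ε := by
        rcases hq0.eq_or_lt with h | h
        · rw [← h]; rw [Real.zero_rpow one_ne_zero]; positivity
        · exact Real.rpow_le_rpow_of_exponent_ge h hq1 h1
      _ ≤ _ := Real.rpow_le_rpow hq0 h4 h0
  rw [hq, div_le_iff₀ hG] at h5
  linarith

/-- Decay of the Grünwald weights, jointly in the index `j` and in the imaginary part `β`: the
factor `(1 + |β|) ^ (-ε)` is bought at the price of `(j + 1) ^ ε`. -/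
lemma gamma_weight_bound {α : ℝ} (hα0 : 0 < α) (hα : ∀ j : ℕ, α ≠ j) {ε : ℝ} (h0 : 0 ≤ ε)
    (h1 : ε ≤ 1) :
    ∃ C : ℝ, 0 ≤ C ∧ ∀ j : ℕ, α < j → ∀ β : ℝ,
      ‖Complex.Gamma ((j : ℂ) - ((α : ℂ) - Complex.I * β))‖ / (j.factorial : ℝ) ≤
        C * ((j : ℝ) + 1) ^ (-1 - α + ε) * (1 + |β|) ^ (-ε) := by
  obtain ⟨C, hC, hb⟩ := gamma_ratio_bound hα0 hα
  refine ⟨C, hC, fun j hj β => ?_⟩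
  have hs : 0 < (j : ℝ) - α := by linarith
  have hj1 : 0 < (j : ℝ) + 1 := by positivity
  have hβ : 0 < 1 + |β| := by positivity
  have e : (j : ℂ) - ((α : ℂ) - Complex.I * β) = (((j : ℝ) - α : ℝ) : ℂ) + Complex.I * β := by
    push_cast; ring
  have hn := norm_gamma_le hs β h0 h1
  rw [e]
  have hG := Real.Gamma_pos_of_pos hs
  have hb' := hb j
  rw [abs_of_pos hG] at hb'
  calc _ ≤ (Real.Gamma (j - α) * ((1 + (j - α)) / (1 + |β|)) ^ ε) / (j.factorial : ℝ) := by gcongr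
    _ = (Real.Gamma (j - α) / (j.factorial : ℝ)) * ((1 + (j - α)) / (1 + |β|)) ^ ε := by ring
    _ ≤ (C * ((j : ℝ) + 1) ^ (-1 - α)) * (((j : ℝ) + 1) / (1 + |β|)) ^ ε := by
      gcongr ?_ * (?_ / _) ^ ε
      linarith
    _ = _ := by
      rw [Real.div_rpow hj1.le hβ.le, Real.rpow_add hj1, Real.rpow_neg hβ.le]
      ring

/-! ### Sums of Grünwald weights -/

/-- The Grünwald weights of order `z`, `0 < re z`, sum to zero: their partial sums telescope. -/
lemma hasSum_gamma_zero {α : ℝ} (hα0 : 0 < α) (hα : ∀ j : ℕ, α ≠ j) (β : ℝ) :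
    HasSum (fun j : ℕ => Complex.Gamma ((j : ℂ) - ((α : ℂ) - Complex.I * β)) / (j.factorial : ℂ))
      0 := by
  obtain ⟨C, hC, hb⟩ := gamma_weight_bound hα0 hα le_rfl zero_le_one
  simp only [neg_zero, add_zero, Real.rpow_zero, mul_one] at hb
  set z : ℂ := (α : ℂ) - Complex.I * β with hz
  have hzre : z.re = α := by simp [hz]
  have hzne : ∀ j : ℕ, (j : ℂ) - z ≠ 0 := by
    intro j h
    have := congrArg Complex.re h
    simp [hzre] at this
    exact hα j (by linarith)
  have hz0 : z ≠ 0 := by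
    have := hzne 0
    simpa using this
  have hsum : Summable (fun j : ℕ => Complex.Gamma ((j : ℂ) - z) / (j.factorial : ℂ)) := by
    have hs : Summable (fun j : ℕ => C * ((j : ℝ) + 1) ^ (-1 - α)) := by
      have := (summable_nat_add_iff 1).2 (Real.summable_nat_rpow.2 (by linarith : -1 - α < -1))
      simpa using this.mul_left C
    refine hs.of_norm_bounded_eventually_nat ?_
    filter_upwards [eventually_gt_atTop ⌈α⌉₊] with j hj
    have := hb j ((Nat.le_ceil α).trans_lt (by exact_mod_cast hj)) β
    rw [norm_div, Complex.norm_natCast]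
    exact this
  have hpart : ∀ J : ℕ, ∑ j ∈ Finset.range (J + 1),
      Complex.Gamma ((j : ℂ) - z) / (j.factorial : ℂ) =
      -(1 / z) * (Complex.Gamma (((J + 1 : ℕ) : ℂ) - z) / (J.factorial : ℂ)) := by
    have hG : ∀ J : ℕ, Complex.Gamma (((J + 1 : ℕ) : ℂ) - z) =
        ((J : ℂ) - z) * Complex.Gamma ((J : ℂ) - z) := by
      intro J
      rw [← Complex.Gamma_add_one _ (hzne J)]
      push_cast; ring_nf
    intro J
    induction J with
    | zero =>
      simp only [zero_add, Finset.sum_range_one]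
      rw [hG 0]
      simp
      field_simp
    | succ J ih =>
      rw [Finset.sum_range_succ, ih, hG (J + 1), Nat.factorial_succ]
      have : (J.factorial : ℂ) ≠ 0 := by exact_mod_cast J.factorial_ne_zero
      have : (J : ℂ) + 1 ≠ 0 := by exact_mod_cast J.succ_ne_zero
      push_cast
      field_simp
      ring
  have hlim : Tendsto (fun J : ℕ => ∑ j ∈ Finset.range (J + 1),
      Complex.Gamma ((j : ℂ) - z) / (j.factorial : ℂ)) atTop (nhds 0) := by
    have ht : Tendsto (fun J : ℕ => ‖1 / z‖ * (C * ((J : ℝ) + 2) ^ (-α))) atTop (nhds 0) := by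
      have : Tendsto (fun J : ℕ => ((J : ℝ) + 2) ^ (-α)) atTop (nhds 0) :=
        (tendsto_rpow_neg_atTop hα0).comp
          (tendsto_atTop_add_const_right _ _ tendsto_natCast_atTop_atTop)
      simpa using (this.const_mul C).const_mul ‖1 / z‖
    refine squeeze_zero_norm' ?_ ht
    filter_upwards [eventually_gt_atTop ⌈α⌉₊] with J hJ
    rw [hpart, norm_mul, norm_neg, norm_div (Complex.Gamma _), Complex.norm_natCast]
    have h1 := hb (J + 1) ((Nat.le_ceil α).trans_lt (by exact_mod_cast hJ.trans J.lt_succ_self)) β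
    refine mul_le_mul_of_nonneg_left ?_ (norm_nonneg _)
    have hf : (0 : ℝ) < J.factorial := by positivity
    rw [Nat.factorial_succ, div_le_iff₀ (by positivity)] at h1
    rw [div_le_iff₀ hf]
    refine h1.trans ?_
    have hp : (0 : ℝ) < (J : ℝ) + 2 := by positivity
    have hJ2 : (((J + 1 : ℕ) : ℝ) + 1) = J + 2 := by push_cast; ring
    rw [hJ2, show -1 - α = -α + -1 by ring, Real.rpow_add hp, Real.rpow_neg_one]
    have : ((J : ℝ) + 1) / (J + 2) ≤ 1 := by rw [div_le_one hp]; linarith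
    calc _ = C * ((J : ℝ) + 2) ^ (-α) * J.factorial * (((J : ℝ) + 1) / (J + 2)) := by
          push_cast; ring
      _ ≤ C * ((J : ℝ) + 2) ^ (-α) * J.factorial * 1 := by gcongr
      _ = _ := mul_one _
  have := hsum.hasSum
  rwa [tendsto_nhds_unique (this.tendsto_sum_nat.comp (tendsto_add_atTop_nat 1)) hlim] at this

/-- For `1 < α` the Grünwald weights also annihilate `j`: `j Γ(j - z) / j!` is the weight of
order `z - 1` with index `j - 1`. -/
lemma hasSum_gamma_one {α : ℝ} (hα0 : 1 < α) (hα : ∀ j : ℕ, α ≠ j) (β : ℝ) :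
    HasSum (fun j : ℕ => (j : ℂ) *
      (Complex.Gamma ((j : ℂ) - ((α : ℂ) - Complex.I * β)) / (j.factorial : ℂ))) 0 := by
  have h := hasSum_gamma_zero (α := α - 1) (by linarith)
    (fun j hj => hα (j + 1) (by push_cast; linarith)) β
  rw [← hasSum_nat_add_iff' 1]
  convert! h using 1
  · ext j
    rw [Nat.factorial_succ]
    have : (j : ℂ) + 1 ≠ 0 := by exact_mod_cast j.succ_ne_zero
    have : (j.factorial : ℂ) ≠ 0 := by exact_mod_cast j.factorial_ne_zero
    push_cast
    rw [show (j : ℂ) - ((α : ℂ) - 1 - Complex.I * β) = j + 1 - ((α : ℂ) - Complex.I * β) by ring]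
    field_simp
  · simp

/-- The relation between binomial coefficients and Gamma quotients. -/
lemma gamma_mul_gbinom {z : ℂ} (hz : ∀ j : ℕ, z ≠ j) (j : ℕ) :
    Complex.Gamma (1 - z) * (gbinom z j * (-1 : ℂ) ^ j) =
      -z * (Complex.Gamma ((j : ℂ) - z) / (j.factorial : ℂ)) := by
  have hG : ∀ j : ℕ, Complex.Gamma (((j + 1 : ℕ) : ℂ) - z) =
      ((j : ℂ) - z) * Complex.Gamma ((j : ℂ) - z) := by
    intro j
    rw [← Complex.Gamma_add_one _ (fun h => hz j (sub_eq_zero.1 h).symm)]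
    push_cast; ring_nf
  induction j with
  | zero =>
    have := hG 0
    simp [gbinom] at this ⊢
    exact this
  | succ j ih =>
    have h1 : gbinom z (j + 1) = gbinom z j * ((z - j) / (j + 1)) := by
      unfold gbinom
      rw [Finset.prod_range_succ, Nat.factorial_succ]
      have : (j : ℂ) + 1 ≠ 0 := by exact_mod_cast j.succ_ne_zero
      have : (j.factorial : ℂ) ≠ 0 := by exact_mod_cast j.factorial_ne_zero
      push_cast
      field_simp
    have : (j : ℂ) + 1 ≠ 0 := by exact_mod_cast j.succ_ne_zero
    have : (j.factorial : ℂ) ≠ 0 := by exact_mod_cast j.factorial_ne_zero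
    rw [h1, hG, pow_succ, Nat.factorial_succ]
    calc _ = (Complex.Gamma (1 - z) * (gbinom z j * (-1 : ℂ) ^ j)) * ((j - z) / (j + 1)) := by ring
      _ = _ := by
        rw [ih]; push_cast; field_simp

/-! ### Szász–Mirakyan approximation -/

/-- Szász–Mirakyan approximation: the mean of `r (h N)`, with `N` Poisson of mean `y / h`,
tends to `r y`. Linear growth of `r` is allowed because Chebyshev's inequality controls the
deviation from `y` quadratically. -/
lemma szasz_tendsto {r : ℝ → ℝ} (hr : Continuous r) {K : ℝ}
    (hK : ∀ u, 0 ≤ u → |r u| ≤ K * (1 + u)) {y : ℝ} (hy : 0 < y) :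
    Tendsto (fun h : ℝ => ∑' j : ℕ, pois (y / h) j * r (j * h)) (nhdsWithin 0 (Ioi 0))
      (nhds (r y)) := by
  have hK0 : 0 ≤ K := by have := (abs_nonneg _).trans (hK 0 le_rfl); linarith
  have hquad : ∀ ε > 0, ∃ C : ℝ, 0 ≤ C ∧ ∀ u, 0 ≤ u → |r u - r y| ≤ ε + C * (u - y) ^ 2 := by
    intro ε hε
    obtain ⟨δ, hδ, hd⟩ := Metric.continuous_iff.1 hr y ε hε
    refine ⟨K / δ + (2 * K + 2 * K * y) / δ ^ 2, by positivity, fun u hu => ?_⟩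
    by_cases hud : |u - y| < δ
    · have := hd u (by rwa [Real.dist_eq])
      rw [Real.dist_eq] at this
      have : 0 ≤ (K / δ + (2 * K + 2 * K * y) / δ ^ 2) * (u - y) ^ 2 := by positivity
      linarith
    · push Not at hud
      have h1 : |r u - r y| ≤ K * |u - y| + (2 * K + 2 * K * y) := by
        have e1 := hK u hu
        have e2 := hK y hy.le
        have e3 : |r u - r y| ≤ |r u| + |r y| := abs_sub _ _
        have e4 : u ≤ |u - y| + y := by linarith [le_abs_self (u - y)]
        nlinarith
      have h2 : 1 ≤ |u - y| / δ := by rwa [le_div_iff₀ hδ, one_mul]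
      have h3 : |u - y| ≤ (u - y) ^ 2 / δ := by
        rw [← sq_abs, pow_two, mul_div_assoc]
        exact le_mul_of_one_le_right (abs_nonneg _) h2
      have h4 : 1 ≤ (u - y) ^ 2 / δ ^ 2 := by
        rw [← sq_abs, ← div_pow]
        exact one_le_pow₀ h2
      have h5 : K * |u - y| ≤ K * ((u - y) ^ 2 / δ) := by gcongr
      have h6 : (2 * K + 2 * K * y) * 1 ≤ (2 * K + 2 * K * y) * ((u - y) ^ 2 / δ ^ 2) := by gcongr
      calc _ ≤ K * ((u - y) ^ 2 / δ) + (2 * K + 2 * K * y) * ((u - y) ^ 2 / δ ^ 2) := by linarith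
        _ = (K / δ + (2 * K + 2 * K * y) / δ ^ 2) * (u - y) ^ 2 := by ring
        _ ≤ _ := by linarith
  rw [Metric.tendsto_nhdsWithin_nhds]
  intro ε hε
  obtain ⟨C, hC, hq⟩ := hquad (ε / 2) (by positivity)
  refine ⟨ε / (2 * (C * y + 1)), by positivity, fun {h} hh hhd => ?_⟩
  simp only [mem_Ioi] at hh
  rw [dist_zero_right, Real.norm_of_nonneg hh.le, lt_div_iff₀ (by positivity)] at hhd
  have hs1 := ((pois_hasSum (y / h)).mul_left (ε / 2)).add ((pois_variance hh y).mul_left C)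
  have hbd : ∀ j : ℕ, ‖pois (y / h) j * (r (j * h) - r y)‖ ≤
      ε / 2 * pois (y / h) j + C * ((j * h - y) ^ 2 * pois (y / h) j) := by
    intro j
    have hp := pois_nonneg (div_nonneg hy.le hh.le) j
    rw [norm_mul, Real.norm_of_nonneg hp, Real.norm_eq_abs]
    calc _ ≤ pois (y / h) j * (ε / 2 + C * (j * h - y) ^ 2) := by
          gcongr; exact hq _ (by positivity)
      _ = _ := by ring
  have hsum := hs1.summable.of_norm_bounded hbd
  have hle := tsum_of_norm_bounded hs1 hbd
  have hconst := (pois_hasSum (y / h)).mul_right (r y)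
  have e : ∑' j : ℕ, pois (y / h) j * r (j * h) =
      ∑' j : ℕ, pois (y / h) j * (r (j * h) - r y) + r y := by
    have := (hsum.hasSum.add hconst).tsum_eq
    rw [one_mul] at this
    rw [← this]
    congr 1; ext j; ring
  rw [e, Real.dist_eq, add_sub_cancel_right]
  rw [Real.norm_eq_abs] at hle
  nlinarith

/-! ### Integration against the measure `φ` -/

/-- Layer cake: integration by parts of a primitive against `φ` with tail
`φ((r, ∞)) = r^{-α} θ(log r)`. -/
lemma layer_cake {α : ℝ} {θ : ℝ → ℝ} (hθ0 : ∀ x, 0 < θ x) (hθc : Continuous θ) {B : ℝ}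
    (hB : ∀ x, θ x ≤ B) {φ : Measure ℝ}
    (hφ : ∀ r : ℝ, 0 < r → φ (Ioi r) = ENNReal.ofReal (r ^ (-α) * θ (Real.log r)))
    (hφ0 : φ (Iic 0) = 0) {g : ℝ → ℝ} (hg : Continuous g) (hg0 : ∀ t, 0 ≤ t → 0 ≤ g t)
    (hgi : IntegrableOn (fun t => t ^ (-α) * g t) (Ioi 0)) :
    Integrable (fun y => ∫ t in (0 : ℝ)..y, g t) φ ∧
      ∫ y, (∫ t in (0 : ℝ)..y, g t) ∂φ =
        ∫ t in Ioi 0, t ^ (-α) * θ (Real.log t) * g t := by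
  have hpos : ∀ᵐ y ∂φ, 0 < y := by
    rw [ae_iff]
    simpa [Iic] using hφ0
  have hlc := lintegral_comp_eq_lintegral_meas_lt_mul (f := id) φ
    (hpos.mono fun y hy => hy.le) aemeasurable_id (g := g)
    (fun t _ => hg.intervalIntegrable 0 t)
    ((ae_restrict_mem measurableSet_Ioi).mono fun t ht => hg0 t (le_of_lt ht))
  have hGc : Continuous (fun y => ∫ t in (0 : ℝ)..y, g t) :=
    intervalIntegral.continuous_primitive (fun a b => hg.intervalIntegrable a b) 0
  have hG0 : 0 ≤ᵐ[φ] fun y => ∫ t in (0 : ℝ)..y, g t := by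
    filter_upwards [hpos] with y hy
    exact intervalIntegral.integral_nonneg hy.le fun t ht => hg0 t ht.1
  have hnn : 0 ≤ᵐ[volume.restrict (Ioi 0)] fun t => t ^ (-α) * θ (Real.log t) * g t := by
    filter_upwards [ae_restrict_mem measurableSet_Ioi] with t ht
    have := hg0 t (le_of_lt ht)
    have := (hθ0 (Real.log t)).le
    have := Real.rpow_nonneg (le_of_lt ht) (-α)
    simp only [Pi.zero_apply]
    positivity
  have hmeas : Measurable fun t : ℝ => t ^ (-α) * θ (Real.log t) * g t :=
    ((measurable_id.pow_const _).mul (hθc.measurable.comp Real.measurable_log)).mul hg.measurable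
  have hint : IntegrableOn (fun t => t ^ (-α) * θ (Real.log t) * g t) (Ioi 0) := by
    refine (hgi.const_mul B).mono' hmeas.aestronglyMeasurable ?_
    filter_upwards [ae_restrict_mem measurableSet_Ioi, hnn] with t ht h0
    rw [Real.norm_of_nonneg h0]
    have h1 := hg0 t (le_of_lt ht)
    have h2 := Real.rpow_nonneg (le_of_lt ht) (-α)
    have h3 := mul_le_mul_of_nonneg_right (hB (Real.log t)) (mul_nonneg h2 h1)
    linarith
  have hR : ∫⁻ y, ENNReal.ofReal (∫ t in (0 : ℝ)..y, g t) ∂φ =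
      ∫⁻ t in Ioi 0, ENNReal.ofReal (t ^ (-α) * θ (Real.log t) * g t) := by
    simp only [id] at hlc
    rw [hlc]
    refine setLIntegral_congr_fun measurableSet_Ioi fun t ht => ?_
    have e : {a : ℝ | t < a} = Ioi t := rfl
    simp only [e]
    rw [hφ t ht, ← ENNReal.ofReal_mul]
    have := (hθ0 (Real.log t)).le
    have := Real.rpow_nonneg (le_of_lt ht) (-α)
    positivity
  refine ⟨⟨hGc.measurable.aestronglyMeasurable, ?_⟩, ?_⟩
  · rw [hasFiniteIntegral_iff_ofReal hG0, hR, ← ofReal_integral_eq_lintegral_ofReal hint hnn]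
    exact ENNReal.ofReal_lt_top
  · rw [integral_eq_lintegral_of_nonneg_ae hG0 hGc.measurable.aestronglyMeasurable, hR,
      integral_eq_lintegral_of_nonneg_ae hnn hmeas.aestronglyMeasurable]

lemma pois_continuous (h : ℝ) (j : ℕ) : Continuous fun y => pois (y / h) j := by
  unfold pois; fun_prop

/-- A Poisson weight of positive index is a difference of primitives of nonnegative functions, to
each of which the layer-cake formula applies. -/
lemma pois_primitive {h : ℝ} (hh : 0 < h) (i : ℕ) (y : ℝ) :
    pois (y / h) (i + 1) = (∫ t in (0 : ℝ)..y, pois (t / h) i / h) -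
      ∫ t in (0 : ℝ)..y, pois (t / h) (i + 1) / h := by
  have hc : ∀ j : ℕ, Continuous fun t => pois (t / h) j / h := fun j =>
    (pois_continuous h j).div_const h
  rw [← intervalIntegral.integral_sub ((hc i).intervalIntegrable _ _)
    ((hc (i + 1)).intervalIntegrable _ _)]
  have hd : ∀ t ∈ uIcc 0 y, HasDerivAt (fun t => pois (t / h) (i + 1))
      (pois (t / h) i / h - pois (t / h) (i + 1) / h) t := by
    intro t _
    have h1 : HasDerivAt (fun t : ℝ => t / h) (1 / h) t := (hasDerivAt_id t).div_const h
    have h2 := (h1.neg.exp.mul (h1.pow (i + 1))).div_const ((i + 1).factorial : ℝ)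
    unfold pois
    convert! h2 using 1
    rw [Nat.factorial_succ]
    have : (i.factorial : ℝ) ≠ 0 := by positivity
    have : (i : ℝ) + 1 ≠ 0 := by positivity
    push_cast
    change _ = (Real.exp (-(t / h)) * -(1 / h) * (t / h) ^ (i + 1) +
      Real.exp (-(t / h)) * ((i + 1) * (t / h) ^ i * (1 / h))) / _
    field_simp
    ring
  rw [intervalIntegral.integral_eq_sub_of_hasDerivAt hd
    (((hc i).sub (hc (i + 1))).intervalIntegrable _ _)]
  simp [pois]

lemma integrableOn_rpow_mul_pois {α h : ℝ} (hh : 0 < h) {j : ℕ} (hj : α < j + 1) :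
    IntegrableOn (fun t => t ^ (-α) * (pois (t / h) j / h)) (Ioi 0) := by
  have h1 := integrableOn_rpow_mul_exp_neg_mul_rpow (p := 1) (s := j - α) (b := 1 / h)
    (by linarith) one_pos (by positivity)
  refine IntegrableOn.congr_fun (h1.const_mul (1 / (h ^ (j + 1) * j.factorial))) ?_
    measurableSet_Ioi
  intro t ht
  simp only [mem_Ioi] at ht
  simp only [Real.rpow_one, pois]
  rw [sub_eq_add_neg, Real.rpow_add ht, Real.rpow_natCast, div_pow,
    show -(1 / h) * t = -(t / h) by ring]
  field_simp
  ring

/-- The Mellin transform of a Poisson weight. -/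
lemma mellin_pois {α h : ℝ} (hh : 0 < h) {j : ℕ} (hj : α < j + 1) (β : ℝ) :
    ∫ t in Ioi (0 : ℝ), (t : ℂ) ^ (-((α : ℂ) - Complex.I * β)) * ((pois (t / h) j / h : ℝ) : ℂ) =
      (h : ℂ) ^ (-((α : ℂ) - Complex.I * β)) *
        (Complex.Gamma ((j : ℂ) + 1 - ((α : ℂ) - Complex.I * β)) / (j.factorial : ℂ)) := by
  set z : ℂ := (α : ℂ) - Complex.I * β with hz
  have hre : 0 < ((j : ℂ) + 1 - z).re := by simp [hz]; linarith
  have h1 := Complex.integral_cpow_mul_exp_neg_mul_Ioi (a := (j : ℂ) + 1 - z) (r := 1 / h)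
    hre (by positivity)
  have hh0 : (h : ℂ) ≠ 0 := by exact_mod_cast hh.ne'
  have hf : (j.factorial : ℂ) ≠ 0 := by exact_mod_cast j.factorial_ne_zero
  have e : ∀ t ∈ Ioi (0 : ℝ), (t : ℂ) ^ (-z) * ((pois (t / h) j / h : ℝ) : ℂ) =
      (1 / ((h : ℂ) ^ (j + 1) * j.factorial)) *
        ((t : ℂ) ^ ((j : ℂ) + 1 - z - 1) * Complex.exp (-(((1 / h : ℝ) : ℂ) * t))) := by
    intro t ht
    simp only [mem_Ioi] at ht
    have ht0 : (t : ℂ) ≠ 0 := by exact_mod_cast ht.ne'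
    rw [show (j : ℂ) + 1 - z - 1 = -z + (j : ℂ) by ring, Complex.cpow_add _ _ ht0,
      Complex.cpow_natCast]
    unfold pois
    push_cast
    rw [show -(1 / (h : ℂ) * t) = -((t : ℂ) / h) by ring, div_pow]
    field_simp
    ring
  rw [setIntegral_congr_fun measurableSet_Ioi e, integral_const_mul, h1]
  have e2 : (1 / ((1 / h : ℝ) : ℂ)) = h := by push_cast; field_simp
  rw [e2, show (j : ℂ) + 1 - z = -z + ((j + 1 : ℕ) : ℂ) by push_cast; ring,
    Complex.cpow_add _ _ hh0, Complex.cpow_natCast]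
  field_simp

/-- Fourier expansion of the layer-cake integral of a Poisson weight. -/
lemma hasSum_mellin_pois {α h : ℝ} (hh : 0 < h) {j : ℕ} (hj : α < j + 1)
    {θ : ℝ → ℝ} {cfs : ℤ → ℂ} {β : ℤ → ℝ} (hs : Summable fun k => ‖cfs k‖)
    (hθ : ∀ x : ℝ, HasSum (fun k => cfs k * Complex.exp (Complex.I * (β k) * (x : ℂ))) (θ x : ℂ)) :
    HasSum (fun k => cfs k * ((h : ℂ) ^ (-((α : ℂ) - Complex.I * β k)) *
        (Complex.Gamma ((j : ℂ) + 1 - ((α : ℂ) - Complex.I * β k)) / (j.factorial : ℂ))))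
      ((∫ t in Ioi 0, t ^ (-α) * θ (Real.log t) * (pois (t / h) j / h) : ℝ) : ℂ) := by
  set F : ℤ → ℝ → ℂ := fun k t => cfs k *
    ((t : ℂ) ^ (-((α : ℂ) - Complex.I * β k)) * ((pois (t / h) j / h : ℝ) : ℂ)) with hF
  have hreal := integrableOn_rpow_mul_pois (α := α) hh hj
  have hnorm : ∀ k, ∀ t ∈ Ioi (0 : ℝ), ‖F k t‖ = ‖cfs k‖ * (t ^ (-α) * (pois (t / h) j / h)) := by
    intro k t ht
    have ht' : 0 < t := ht
    rw [hF]
    simp only [norm_mul, Complex.norm_real]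
    rw [Complex.norm_cpow_eq_rpow_re_of_pos ht',
      Real.norm_of_nonneg (div_nonneg (pois_nonneg (by positivity) j) hh.le)]
    simp
  have hmeas : ∀ k, AEStronglyMeasurable (F k) (volume.restrict (Ioi 0)) := by
    intro k
    refine ContinuousOn.aestronglyMeasurable ?_ measurableSet_Ioi
    refine continuousOn_const.mul (ContinuousOn.mul ?_ ?_)
    · intro t ht
      exact (Complex.continuousAt_ofReal_cpow_const t _ (Or.inr (ne_of_gt ht))).continuousWithinAt
    · exact (Complex.continuous_ofReal.comp ((pois_continuous h j).div_const h)).continuousOn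
  have hint : ∀ k, Integrable (F k) (volume.restrict (Ioi 0)) := by
    intro k
    refine (hreal.const_mul ‖cfs k‖).mono' (hmeas k) ?_
    filter_upwards [ae_restrict_mem measurableSet_Ioi] with t ht
    exact (hnorm k t ht).le
  have hsum : Summable fun k => ∫ t in Ioi 0, ‖F k t‖ := by
    have : (fun k => ∫ t in Ioi 0, ‖F k t‖) =
        fun k => ‖cfs k‖ * ∫ t in Ioi 0, t ^ (-α) * (pois (t / h) j / h) := by
      ext k
      rw [setIntegral_congr_fun measurableSet_Ioi (hnorm k), integral_const_mul]
    rw [this]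
    exact hs.mul_right _
  have key := hasSum_integral_of_summable_integral_norm hint hsum
  convert! key using 1
  · ext k
    rw [hF, integral_const_mul, mellin_pois hh hj]
  · rw [← integral_complex_ofReal]
    refine setIntegral_congr_fun measurableSet_Ioi fun t ht => ?_
    have ht' : 0 < t := ht
    have ht0 : (t : ℂ) ≠ 0 := by exact_mod_cast ht'.ne'
    have h1 := ((hθ (Real.log t)).mul_left ((t : ℂ) ^ (-(α : ℂ)))).mul_right
      ((pois (t / h) j / h : ℝ) : ℂ)
    have e : (fun k => F k t) = fun k => (t : ℂ) ^ (-(α : ℂ)) *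
        (cfs k * Complex.exp (Complex.I * (β k) * (Real.log t : ℂ))) *
          ((pois (t / h) j / h : ℝ) : ℂ) := by
      ext k
      rw [hF]
      simp only
      rw [show -((α : ℂ) - Complex.I * β k) = -(α : ℂ) + Complex.I * β k by ring,
        Complex.cpow_add _ _ ht0, Complex.cpow_def_of_ne_zero ht0 (Complex.I * β k),
        ← Complex.ofReal_log ht'.le]
      ring_nf
    rw [e, h1.tsum_eq]
    push_cast
    rw [Complex.ofReal_cpow ht'.le]
    push_cast
    ring

/-- Integrals of the Poisson weights against `φ`, expanded over the Fourier modes of `θ`. -/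
lemma hasSum_integral_pois {α : ℝ} {θ : ℝ → ℝ} (hθ0 : ∀ x, 0 < θ x) (hθc : Continuous θ) {B : ℝ}
    (hB : ∀ x, θ x ≤ B) {φ : Measure ℝ}
    (hφ : ∀ r : ℝ, 0 < r → φ (Ioi r) = ENNReal.ofReal (r ^ (-α) * θ (Real.log r)))
    (hφ0 : φ (Iic 0) = 0) {cfs : ℤ → ℂ} {β : ℤ → ℝ} (hs : Summable fun k => ‖cfs k‖)
    (hθ : ∀ x : ℝ, HasSum (fun k => cfs k * Complex.exp (Complex.I * (β k) * (x : ℂ))) (θ x : ℂ))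
    {h : ℝ} (hh : 0 < h) {j : ℕ} (hj : α < j) (hj1 : 1 ≤ j) :
    Integrable (fun y => pois (y / h) j) φ ∧
    HasSum (fun k => cfs k * ((h : ℂ) ^ (-((α : ℂ) - Complex.I * β k)) *
        (((α : ℂ) - Complex.I * β k) *
          (Complex.Gamma ((j : ℂ) - ((α : ℂ) - Complex.I * β k)) / (j.factorial : ℂ)))))
      ((∫ y, pois (y / h) j ∂φ : ℝ) : ℂ) := by
  obtain ⟨i, rfl⟩ : ∃ i, j = i + 1 := ⟨j - 1, by omega⟩
  push_cast at hj
  have lc : ∀ l : ℕ, α < l + 1 → _ := fun l hl =>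
    layer_cake (α := α) hθ0 hθc hB hφ hφ0 (g := fun t => pois (t / h) l / h)
      ((pois_continuous h l).div_const h)
      (fun t ht => div_nonneg (pois_nonneg (by positivity) l) hh.le)
      (integrableOn_rpow_mul_pois hh hl)
  have hj' : α < ((i + 1 : ℕ) : ℝ) + 1 := by push_cast; linarith
  obtain ⟨i1, e1⟩ := lc i hj
  obtain ⟨i2, e2⟩ := lc (i + 1) hj'
  have hfun : (fun y => pois (y / h) (i + 1)) = fun y =>
      (∫ t in (0 : ℝ)..y, pois (t / h) i / h) - ∫ t in (0 : ℝ)..y, pois (t / h) (i + 1) / h :=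
    funext fun y => pois_primitive hh i y
  rw [hfun]
  refine ⟨i1.sub i2, ?_⟩
  rw [integral_sub i1 i2, e1, e2]
  have := (hasSum_mellin_pois (α := α) hh hj hs hθ).sub (hasSum_mellin_pois (α := α) hh hj' hs hθ)
  rw [← Complex.ofReal_sub] at this
  convert! this using 1
  ext k
  set z : ℂ := (α : ℂ) - Complex.I * β k with hz
  have hne : (i : ℂ) + 1 - z ≠ 0 := by
    intro h0
    have := congrArg Complex.re h0
    simp [hz] at this
    linarith
  have hG := Complex.Gamma_add_one _ hne
  rw [show (((i + 1 : ℕ) : ℂ)) + 1 - z = (i : ℂ) + 1 - z + 1 by push_cast; ring, hG,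
    Nat.factorial_succ]
  have : (i.factorial : ℂ) ≠ 0 := by exact_mod_cast i.factorial_ne_zero
  have : (i : ℂ) + 1 ≠ 0 := by exact_mod_cast i.succ_ne_zero
  push_cast
  field_simp
  ring

/-! ### Poisson mixtures -/

lemma summable_mul_pois {a : ℕ → ℝ} {K : ℝ} (ha : ∀ j, |a j| ≤ K * (j + 1)) {t : ℝ} (ht : 0 ≤ t) :
    Summable fun j => pois t j * a j := by
  have hs := (((pois_hasSum_one t).add (pois_hasSum t)).mul_left K).summable
  refine hs.of_norm_bounded fun j => ?_
  have hp := pois_nonneg ht j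
  rw [norm_mul, Real.norm_of_nonneg hp, Real.norm_eq_abs]
  calc _ ≤ pois t j * (K * (j + 1)) := by gcongr; exact ha j
    _ = _ := by ring

lemma aestronglyMeasurable_pois_tsum {φ : Measure ℝ} (hpos : ∀ᵐ y ∂φ, 0 < y) {a : ℕ → ℝ} {K : ℝ}
    (ha : ∀ j, |a j| ≤ K * (j + 1)) {h : ℝ} (hh : 0 < h) :
    AEStronglyMeasurable (fun y => ∑' j, pois (y / h) j * a j) φ := by
  refine aestronglyMeasurable_of_tendsto_ae atTop
    (f := fun J y => ∑ j ∈ Finset.range J, pois (y / h) j * a j) (fun J => ?_) ?_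
  · exact (continuous_finsetSum _ fun j _ =>
      (pois_continuous h j).mul continuous_const).measurable.aestronglyMeasurable
  · filter_upwards [hpos] with y hy
    exact (summable_mul_pois ha (div_nonneg hy.le hh.le)).hasSum.tendsto_sum_nat

/-- The integral of a Poisson mixture against `φ` as a series over the Fourier modes of `θ`.
The two exchanges of sum and integral rest on the absolute summability of
`a_j c_k z_k Γ(j - z_k) / j!` over `(j, k)`, where the vertical decay of `Γ` gains the factor
`|β_k|^{-ε}` that makes the sum over `k` converge. -/
lemma integral_pois_tsum {α : ℝ} {m : ℕ} (hm : (m : ℝ) < α) (hm1 : α < m + 1)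
    {θ : ℝ → ℝ} (hθ0 : ∀ x, 0 < θ x) (hθc : Continuous θ) {B : ℝ}
    (hB : ∀ x, θ x ≤ B) {φ : Measure ℝ}
    (hφ : ∀ r : ℝ, 0 < r → φ (Ioi r) = ENNReal.ofReal (r ^ (-α) * θ (Real.log r)))
    (hφ0 : φ (Iic 0) = 0) {cfs : ℤ → ℂ} {β : ℤ → ℝ} (hs : Summable fun k => ‖cfs k‖)
    (hsε : ∀ ε : ℝ, 0 < ε → ε ≤ 1 → Summable fun k => ‖cfs k‖ * (1 + |β k|) ^ (1 - ε))
    (hθ : ∀ x : ℝ, HasSum (fun k => cfs k * Complex.exp (Complex.I * (β k) * (x : ℂ))) (θ x : ℂ))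
    {h : ℝ} (hh : 0 < h) {a : ℕ → ℝ} {K : ℝ} (ha0 : ∀ j ≤ m, a j = 0)
    (ha : ∀ j, |a j| ≤ K * ((j : ℝ) + 1) ^ m) :
    ((∫ y, ∑' j, pois (y / h) j * a j ∂φ : ℝ) : ℂ) =
      ∑' k : ℤ, cfs k * ((h : ℂ) ^ (-((α : ℂ) - Complex.I * β k)) *
        (((α : ℂ) - Complex.I * β k) * ∑' j : ℕ, (a j : ℂ) *
          (Complex.Gamma ((j : ℂ) - ((α : ℂ) - Complex.I * β k)) / (j.factorial : ℂ)))) := by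
  have hm0 : (0 : ℝ) ≤ m := Nat.cast_nonneg m
  have hα0 : 0 < α := by linarith
  have hαn : ∀ j : ℕ, α ≠ j := by
    intro j hj
    rw [hj] at hm hm1
    have h1 : m < j := by exact_mod_cast hm
    have h2 : j < m + 1 := by exact_mod_cast hm1
    omega
  have hpos : ∀ᵐ y ∂φ, 0 < y := by
    rw [ae_iff]
    simpa [Iic] using hφ0
  have hK : 0 ≤ K := by
    have := (abs_nonneg _).trans (ha 0)
    simpa using this
  obtain ⟨ε, hε0, hεlt, hε1⟩ : ∃ ε : ℝ, 0 < ε ∧ ε < α - m ∧ ε ≤ 1 :=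
    ⟨(α - m) / 2, by linarith, by linarith, by linarith⟩
  obtain ⟨C, hC, hb⟩ := gamma_weight_bound hα0 hαn hε0.le hε1
  set z : ℤ → ℂ := fun k => (α : ℂ) - Complex.I * β k with hz
  set F : ℕ → ℤ → ℂ := fun j k => cfs k * ((h : ℂ) ^ (-z k) * (z k * ((a j : ℂ) *
    (Complex.Gamma ((j : ℂ) - z k) / (j.factorial : ℂ))))) with hF
  have hFb : ∀ j k, ‖F j k‖ ≤ (K * h ^ (-α) * (α + 1) * C) *
      (((j : ℝ) + 1) ^ (m - 1 - α + ε) * (‖cfs k‖ * (1 + |β k|) ^ (1 - ε))) := by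
    intro j k
    have hj1 : (0 : ℝ) < (j : ℝ) + 1 := by positivity
    have hβ : (0 : ℝ) < 1 + |β k| := by positivity
    rcases le_or_gt j m with hjm | hjm
    · simp only [hF, ha0 j hjm]
      simp only [Complex.ofReal_zero, zero_mul, mul_zero, norm_zero]
      positivity
    · have hαj : α < j := by
        have : ((m + 1 : ℕ) : ℝ) ≤ j := by exact_mod_cast hjm
        push_cast at this
        linarith
      have hzn : ‖z k‖ ≤ (α + 1) * (1 + |β k|) := by
        calc ‖z k‖ ≤ ‖(α : ℂ)‖ + ‖Complex.I * β k‖ := norm_sub_le _ _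
          _ = α + |β k| := by simp [abs_of_pos hα0]
          _ ≤ _ := by nlinarith [abs_nonneg (β k)]
      have hhn : ‖(h : ℂ) ^ (-z k)‖ = h ^ (-α) := by
        rw [Complex.norm_cpow_eq_rpow_re_of_pos hh]; simp [hz]
      simp only [hF]
      rw [norm_mul, norm_mul, norm_mul, norm_mul, norm_div, hhn, Complex.norm_natCast,
        Complex.norm_real, Real.norm_eq_abs]
      calc _ ≤ ‖cfs k‖ * (h ^ (-α) * (((α + 1) * (1 + |β k|)) * ((K * ((j : ℝ) + 1) ^ m) *
            (C * ((j : ℝ) + 1) ^ (-1 - α + ε) * (1 + |β k|) ^ (-ε))))) := by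
            gcongr
            · exact ha j
            · exact hb j hαj (β k)
        _ = _ := by
          rw [show (m : ℝ) - 1 - α + ε = m + (-1 - α + ε) by ring,
            Real.rpow_add hj1 (m : ℝ) (-1 - α + ε), Real.rpow_natCast, sub_eq_add_neg 1 ε,
            Real.rpow_add hβ, Real.rpow_one]
          ring
  have hFs : Summable (Function.uncurry F) := by
    have s1 : Summable fun j : ℕ => ((j : ℝ) + 1) ^ (m - 1 - α + ε) := by
      have := (summable_nat_add_iff 1).2
        (Real.summable_nat_rpow.2 (by linarith : (m : ℝ) - 1 - α + ε < -1))
      simpa using this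
    have s2 := hsε ε hε0 hε1
    have s3 := (s1.mul_of_nonneg s2 (fun j => by simp only [Pi.zero_apply]; positivity)
      (fun k => by simp only [Pi.zero_apply]; positivity)).mul_left (K * h ^ (-α) * (α + 1) * C)
    exact s3.of_norm_bounded fun p => hFb p.1 p.2
  have hpi : ∀ j, Integrable (fun y => pois (y / h) j * a j) φ ∧
      HasSum (F j) ((∫ y, pois (y / h) j * a j ∂φ : ℝ) : ℂ) := by
    intro j
    rcases le_or_gt j m with hjm | hjm
    · simp [hF, ha0 j hjm]
    · have hαj : α < j := by
        have : ((m + 1 : ℕ) : ℝ) ≤ j := by exact_mod_cast hjm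
        push_cast at this
        linarith
      obtain ⟨i1, i2⟩ := hasSum_integral_pois (α := α) hθ0 hθc hB hφ hφ0 hs hθ hh hαj (by omega)
      refine ⟨i1.mul_const _, ?_⟩
      rw [integral_mul_const]
      have := i2.mul_right (a j : ℂ)
      rw [← Complex.ofReal_mul] at this
      convert! this using 1
      ext k
      simp only [hF, hz]
      ring
  have hn : Summable fun j => ∫ y, ‖pois (y / h) j * a j‖ ∂φ := by
    have := hFs.prod.norm
    refine this.congr fun j => ?_
    have e := (hpi j).2.tsum_eq
    simp only [Function.uncurry] at e ⊢
    rw [e, integral_mul_const, Complex.norm_real, norm_mul,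
      Real.norm_of_nonneg (integral_nonneg_of_ae ?_), ← integral_mul_const]
    · refine integral_congr_ae ?_
      filter_upwards [hpos] with y hy
      rw [norm_mul, Real.norm_of_nonneg (pois_nonneg (div_nonneg hy.le hh.le) j)]
    · filter_upwards [hpos] with y hy
      exact pois_nonneg (div_nonneg hy.le hh.le) j
  rw [← (hasSum_integral_of_summable_integral_norm (fun j => (hpi j).1) hn).tsum_eq,
    Complex.ofReal_tsum]
  have e1 : ∀ j, ((∫ y, pois (y / h) j * a j ∂φ : ℝ) : ℂ) = ∑' k, F j k :=
    fun j => (hpi j).2.tsum_eq.symm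
  simp_rw [e1]
  rw [← hFs.tsum_comm]
  simp only [hF, hz, tsum_mul_left]

/-! ### Integrable majorants -/

/-- An integrable majorant of `min 1 y`, namely `2 (1 - e^{-y})`. -/
lemma exists_majorant_lt {α : ℝ} (hα1 : α < 1) {θ : ℝ → ℝ} (hθ0 : ∀ x, 0 < θ x)
    (hθc : Continuous θ) {B : ℝ} (hB : ∀ x, θ x ≤ B) {φ : Measure ℝ}
    (hφ : ∀ r : ℝ, 0 < r → φ (Ioi r) = ENNReal.ofReal (r ^ (-α) * θ (Real.log r)))
    (hφ0 : φ (Iic 0) = 0) :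
    ∃ D : ℝ → ℝ, Integrable D φ ∧ ∀ y, 0 < y → min 1 y ≤ D y := by
  have hi := (layer_cake (α := α) hθ0 hθc hB hφ hφ0 (g := fun t => Real.exp (-t)) (by fun_prop)
    (fun t _ => (Real.exp_pos _).le) (by
      have := integrableOn_rpow_mul_exp_neg_mul_rpow (p := 1) (s := -α) (b := 1)
        (by linarith) one_pos one_pos
      simpa using this)).1
  refine ⟨_, hi.const_mul 2, fun y hy => ?_⟩
  have e : ∫ t in (0 : ℝ)..y, Real.exp (-t) = 1 - Real.exp (-y) := by
    simp
  rw [e]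
  have h1 : Real.exp (-y) ≤ 1 / (1 + y) := by
    rw [Real.exp_neg, ← one_div]
    exact one_div_le_one_div_of_le (by linarith) (by linarith [Real.add_one_le_exp y])
  have h2 : 1 - 1 / (1 + y) = y / (1 + y) := by field_simp; ring
  have h3 : min 1 y ≤ 2 * (y / (1 + y)) := by
    rw [← mul_div_assoc, le_div_iff₀ (by linarith)]
    rcases le_total 1 y with h | h
    · rw [min_eq_left h]; linarith
    · rw [min_eq_right h]; nlinarith
  linarith

/-- An integrable majorant of `min y (y ^ 2)`, namely `3 (√(1 + y ^ 2) - 1)`. -/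
lemma exists_majorant_gt {α : ℝ} (hα1 : 1 < α) (hα2 : α < 2) {θ : ℝ → ℝ} (hθ0 : ∀ x, 0 < θ x)
    (hθc : Continuous θ) {B : ℝ} (hB : ∀ x, θ x ≤ B) {φ : Measure ℝ}
    (hφ : ∀ r : ℝ, 0 < r → φ (Ioi r) = ENNReal.ofReal (r ^ (-α) * θ (Real.log r)))
    (hφ0 : φ (Iic 0) = 0) :
    ∃ D : ℝ → ℝ, Integrable D φ ∧ ∀ y, 0 < y → min y (y ^ 2) ≤ D y := by
  have hsq : ∀ t : ℝ, 0 < √(1 + t ^ 2) := fun t => Real.sqrt_pos.2 (by positivity)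
  have hgc : Continuous fun t : ℝ => t / √(1 + t ^ 2) :=
    continuous_id.div (by fun_prop) fun t => (hsq t).ne'
  have hmeas : Measurable fun t : ℝ => t ^ (-α) * (t / √(1 + t ^ 2)) :=
    (measurable_id.pow_const _).mul hgc.measurable
  have hint : IntegrableOn (fun t : ℝ => t ^ (-α) * (t / √(1 + t ^ 2))) (Ioi 0) := by
    rw [← Ioc_union_Ioi_eq_Ioi (zero_le_one' ℝ)]
    refine IntegrableOn.union ?_ ?_
    · have h1 : IntegrableOn (fun t : ℝ => t ^ (1 - α)) (Ioc 0 1) :=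
        (intervalIntegral.intervalIntegrable_rpow' (by linarith)).1
      refine h1.mono' hmeas.aestronglyMeasurable ?_
      filter_upwards [ae_restrict_mem measurableSet_Ioc] with t ht
      have ht0 := ht.1
      rw [Real.norm_of_nonneg (by positivity), sub_eq_neg_add, Real.rpow_add ht0, Real.rpow_one]
      gcongr
      exact div_le_self ht0.le (Real.one_le_sqrt.2 (by nlinarith))
    · have h1 : IntegrableOn (fun t : ℝ => t ^ (-α)) (Ioi 1) :=
        integrableOn_Ioi_rpow_of_lt (by linarith) one_pos
      refine h1.mono' hmeas.aestronglyMeasurable ?_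
      filter_upwards [ae_restrict_mem measurableSet_Ioi] with t ht
      have ht0 : 0 < t := one_pos.trans ht
      rw [Real.norm_of_nonneg (by positivity)]
      refine mul_le_of_le_one_right (by positivity) ?_
      rw [div_le_one (hsq t)]
      exact Real.le_sqrt_of_sq_le (by linarith)
  have hi := (layer_cake (α := α) hθ0 hθc hB hφ hφ0 hgc
    (fun t ht => div_nonneg ht (hsq t).le) hint).1
  refine ⟨_, hi.const_mul 3, fun y hy => ?_⟩
  have e : ∫ t in (0 : ℝ)..y, t / √(1 + t ^ 2) = √(1 + y ^ 2) - 1 := by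
    have hd : ∀ t ∈ uIcc 0 y, HasDerivAt (fun t : ℝ => √(1 + t ^ 2)) (t / √(1 + t ^ 2)) t := by
      intro t _
      have h1 : HasDerivAt (fun t : ℝ => 1 + t ^ 2) (2 * t) t := by
        simpa using ((hasDerivAt_id t).pow 2).const_add 1
      convert! h1.sqrt (by positivity) using 1
      field_simp
    rw [intervalIntegral.integral_eq_sub_of_hasDerivAt hd (hgc.intervalIntegrable _ _)]
    simp
  rw [e]
  set w := √(1 + y ^ 2) with hw
  have hw2 : w ^ 2 = 1 + y ^ 2 := Real.sq_sqrt (by positivity)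
  have hw1 : w ≤ 1 + y := by
    rw [hw]; exact Real.sqrt_le_iff.2 ⟨by linarith, by nlinarith⟩
  have hw0 : 1 ≤ w := Real.one_le_sqrt.2 (by nlinarith)
  have h1 : y ^ 2 ≤ (w - 1) * (2 + y) := by nlinarith
  rcases le_total 1 y with h | h
  · have : min y (y ^ 2) ≤ y := min_le_left _ _
    nlinarith
  · have : min y (y ^ 2) ≤ y ^ 2 := min_le_right _ _
    nlinarith

/-! ### Taylor estimates -/

/-- First-order Taylor estimate, extended to all `u ≥ 0` by boundedness of `f`. -/
lemma taylor_one {f : ℝ → ℝ} {M : ℝ} (hM : ∀ y, |f y| ≤ M) (hf : ContDiff ℝ 1 f) (x : ℝ) :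
    ∃ K : ℝ, 0 ≤ K ∧ ∀ u, 0 ≤ u → |f x - f (x - u)| ≤ K * min 1 u := by
  have hg : ContDiff ℝ 1 fun u => f (x - u) := hf.comp (contDiff_const.sub contDiff_id)
  obtain ⟨C, hC⟩ := exists_taylor_mean_remainder_bound (n := 0) (zero_le_one' ℝ)
    (f := fun u => f (x - u)) (by simpa using hg.contDiffOn)
  have hM0 : 0 ≤ M := (abs_nonneg _).trans (hM 0)
  refine ⟨|C| + 2 * M, by positivity, fun u hu => ?_⟩
  rcases le_total 1 u with h | h
  · rw [min_eq_left h, mul_one]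
    have h1 := abs_sub (f x) (f (x - u))
    linarith [hM x, hM (x - u), abs_nonneg C]
  · rw [min_eq_right h]
    have h1 := hC u ⟨hu, h⟩
    simp only [taylor_within_zero_eval, Real.norm_eq_abs, sub_zero, zero_add, pow_one] at h1
    rw [abs_sub_comm]
    have := mul_le_mul_of_nonneg_right (le_abs_self C) hu
    nlinarith

/-- Second-order Taylor estimate, extended to all `u ≥ 0` by boundedness of `f`. -/
lemma taylor_two {f : ℝ → ℝ} {M : ℝ} (hM : ∀ y, |f y| ≤ M) (hf : ContDiff ℝ 2 f) (x : ℝ) :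
    ∃ K : ℝ, 0 ≤ K ∧ ∀ u, 0 ≤ u → |f (x - u) - f x + u * deriv f x| ≤ K * u ∧
      |f (x - u) - f x + u * deriv f x| ≤ K * u ^ 2 := by
  have hg : ContDiff ℝ 2 fun u => f (x - u) := hf.comp (contDiff_const.sub contDiff_id)
  obtain ⟨C, hC⟩ := exists_taylor_mean_remainder_bound (n := 1) (zero_le_one' ℝ)
    (f := fun u => f (x - u)) (by
      have := hg.contDiffOn (s := Icc 0 1)
      norm_num
      exact this)
  have hM0 : 0 ≤ M := (abs_nonneg _).trans (hM 0)
  have hd : derivWithin (fun u => f (x - u)) (Icc 0 1) 0 = -deriv f x := by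
    have hfd : HasDerivAt f (deriv f x) (x - 0) := by
      rw [sub_zero]
      exact (hf.differentiable (by norm_num) x).hasDerivAt
    have h1 := hfd.comp_const_sub x 0
    exact h1.hasDerivWithinAt.derivWithin (uniqueDiffOn_Icc_zero_one 0 (by simp))
  have hd0 := abs_nonneg (deriv f x)
  refine ⟨|C| + 2 * M + |deriv f x|, by positivity, fun u hu => ?_⟩
  rcases le_total 1 u with h | h
  · have h1 : |f (x - u) - f x + u * deriv f x| ≤ 2 * M + u * |deriv f x| := by
      have h1 := abs_add_le (f (x - u) - f x) (u * deriv f x)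
      have h2 := abs_sub (f (x - u)) (f x)
      rw [abs_mul, abs_of_nonneg hu] at h1
      linarith [hM x, hM (x - u)]
    have h2 : |f (x - u) - f x + u * deriv f x| ≤ (|C| + 2 * M + |deriv f x|) * u := by
      nlinarith [abs_nonneg C]
    refine ⟨h2, h2.trans ?_⟩
    have : u ≤ u ^ 2 := by nlinarith
    gcongr
  · have h1 := hC u ⟨hu, h⟩
    rw [taylorWithinEval_succ] at h1
    simp only [taylor_within_zero_eval, Real.norm_eq_abs, sub_zero, zero_add, pow_one,
      iteratedDerivWithin_one, hd] at h1
    have e : f (x - u) - (f x + ((((0 : ℕ) : ℝ) + 1) * ((Nat.factorial 0 : ℕ) : ℝ))⁻¹ * u *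
      -deriv f x) = f (x - u) - f x + u * deriv f x := by simp; ring
    have h2 : |f (x - u) - f x + u * deriv f x| ≤ C * u ^ 2 := by
      rw [← e]
      simpa using h1
    have h3 : |f (x - u) - f x + u * deriv f x| ≤ (|C| + 2 * M + |deriv f x|) * u ^ 2 := by
      refine h2.trans ?_
      gcongr
      linarith [le_abs_self C]
    refine ⟨h3.trans ?_, h3⟩
    have : u ^ 2 ≤ u := by nlinarith
    gcongr

/-! ### One Fourier mode of the Grünwald–Letnikov difference -/

/-- Adding a series with sum zero does not change a sum, even when the other series is not
summable (both sides are then `0` by convention). -/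
lemma tsum_add_of_hasSum_zero {u v : ℕ → ℂ} (hu : HasSum u 0) :
    ∑' j, (u j + v j) = ∑' j, v j := by
  by_cases hv : Summable v
  · rw [hu.summable.tsum_add hv, hu.tsum_eq, zero_add]
  · rw [tsum_eq_zero_of_not_summable hv, tsum_eq_zero_of_not_summable]
    intro h
    exact hv (by simpa using h.sub hu.summable)

/-- One Fourier mode of the difference, for `α < 1`: since the weights sum to zero, the values
`f j` may be replaced by the increments `w - f j`. -/
lemma gl_mode_lt {α : ℝ} (hα0 : 0 < α) (hα : ∀ j : ℕ, α ≠ j) (β : ℝ) (f : ℕ → ℝ) (w : ℝ) :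
    Complex.Gamma (1 - ((α : ℂ) - Complex.I * β)) *
      ∑' j : ℕ, gbinom ((α : ℂ) - Complex.I * β) j * (-1 : ℂ) ^ j * (f j : ℂ) =
    ((α : ℂ) - Complex.I * β) * ∑' j : ℕ, ((w - f j : ℝ) : ℂ) *
      (Complex.Gamma ((j : ℂ) - ((α : ℂ) - Complex.I * β)) / (j.factorial : ℂ)) := by
  have h0 := hasSum_gamma_zero hα0 hα β
  set z : ℂ := (α : ℂ) - Complex.I * β with hz
  have hzn : ∀ j : ℕ, z ≠ j := by
    intro j h
    have := congrArg Complex.re h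
    simp [hz] at this
    exact hα j this
  rw [← tsum_mul_left, ← tsum_mul_left]
  have hu := h0.mul_left (z * w)
  rw [mul_zero] at hu
  rw [← tsum_add_of_hasSum_zero hu]
  congr 1; ext j
  rw [← mul_assoc, gamma_mul_gbinom hzn]
  push_cast
  ring

/-- One Fourier mode of the difference, for `1 < α`: the weights annihilate `1` and `j`, so any
affine function of `j` may be subtracted from the values `f j`. -/
lemma gl_mode_gt {α : ℝ} (hα0 : 1 < α) (hα : ∀ j : ℕ, α ≠ j) (β : ℝ) (f : ℕ → ℝ) (w v : ℝ) :
    -(Complex.Gamma (1 - ((α : ℂ) - Complex.I * β)) *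
      ∑' j : ℕ, gbinom ((α : ℂ) - Complex.I * β) j * (-1 : ℂ) ^ j * (f j : ℂ)) =
    ((α : ℂ) - Complex.I * β) * ∑' j : ℕ, ((f j - w + j * v : ℝ) : ℂ) *
      (Complex.Gamma ((j : ℂ) - ((α : ℂ) - Complex.I * β)) / (j.factorial : ℂ)) := by
  have h0 := hasSum_gamma_zero (by linarith) hα β
  have h1 := hasSum_gamma_one hα0 hα β
  set z : ℂ := (α : ℂ) - Complex.I * β with hz
  have hzn : ∀ j : ℕ, z ≠ j := by
    intro j h
    have := congrArg Complex.re h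
    simp [hz] at this
    exact hα j this
  rw [← neg_mul, ← tsum_mul_left, ← tsum_mul_left]
  have hu := (h0.mul_left (-(z * w))).add (h1.mul_left (z * v))
  rw [mul_zero, mul_zero, add_zero] at hu
  rw [← tsum_add_of_hasSum_zero hu]
  congr 1; ext j
  rw [neg_mul (Complex.Gamma (1 - z)), ← mul_assoc (Complex.Gamma (1 - z)), gamma_mul_gbinom hzn]
  push_cast
  ring

/-! ### The limit -/

lemma summable_cfs {cfs : ℤ → ℂ} {C : ℝ} (hC : ∀ k : ℤ, k ≠ 0 → ‖cfs k‖ ≤ C / (k : ℝ) ^ 2)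
    (ctil : ℝ) {ε : ℝ} (h0 : 0 < ε) (h1 : ε ≤ 1) :
    Summable fun k : ℤ => ‖cfs k‖ * (1 + |(k : ℝ) * ctil|) ^ (1 - ε) := by
  have hs := (Real.summable_abs_int_rpow (b := 1 + ε) (by linarith)).mul_left
    (C * (1 + |ctil|) ^ (1 - ε))
  refine Summable.of_norm_bounded_eventually hs ?_
  have : {0}ᶜ ∈ (cofinite : Filter ℤ) := (Set.finite_singleton 0).compl_mem_cofinite
  filter_upwards [this] with k hk
  have hk0 : k ≠ 0 := by simpa using hk
  have hk1 : (1 : ℝ) ≤ |(k : ℝ)| := by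
    have := Int.one_le_abs hk0
    exact_mod_cast this
  have hkp : (0 : ℝ) < |(k : ℝ)| := by linarith
  rw [Real.norm_of_nonneg (by positivity)]
  have hcn := hC k hk0
  have e1 : (1 + |(k : ℝ) * ctil|) ≤ |(k : ℝ)| * (1 + |ctil|) := by
    rw [abs_mul]; nlinarith [abs_nonneg ctil]
  calc _ ≤ C / (k : ℝ) ^ 2 * (|(k : ℝ)| * (1 + |ctil|)) ^ (1 - ε) := by
        have : 0 ≤ C / (k : ℝ) ^ 2 := (norm_nonneg _).trans hcn
        gcongr
    _ = _ := by
      rw [Real.mul_rpow hkp.le (by positivity), ← sq_abs, ← Real.rpow_natCast |(k : ℝ)| 2,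
        div_eq_mul_inv, ← Real.rpow_neg hkp.le]
      rw [show -(1 + ε) = -((2 : ℕ) : ℝ) + (1 - ε) by push_cast; ring, Real.rpow_add hkp]
      ring

theorem stmt14 (c α : ℝ) (hc : 1 < c) (hα : α ∈ Set.Ioo (0 : ℝ) 2) (hα1 : α ≠ 1)
    (θ : ℝ → ℝ) (cfs : ℤ → ℂ) (hθ : IsSmoothAdmissible c α θ cfs)
    (ctil : ℝ) (hctil : ctil = 2 * Real.pi * α / Real.log c)
    (φ₁ : Measure ℝ)
    (hφ : ∀ r : ℝ, 0 < r → φ₁ (Set.Ioi r) = ENNReal.ofReal (r ^ (-α) * θ (Real.log r)))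
    (hφ0 : φ₁ (Set.Iic 0) = 0)
    (ω : ℤ → ℂ)
    (hω : ∀ k : ℤ, ω k = (if α < 1 then 1 else -1) *
      (cfs k * Complex.Gamma (Complex.I * (k : ℂ) * (ctil : ℂ) - (α : ℂ) + 1)))
    (f : ℝ → ℝ) (hfb : ∃ M : ℝ, ∀ y, |f y| ≤ M) (hfi : Integrable f)
    (n : ℕ) (hn : α + 1 < n) (hfd : ContDiff ℝ n f)
    (hfn : Integrable (iteratedDeriv n f))
    (GLd : ℝ → ℝ → ℂ)
    (hGLd : ∀ h > (0 : ℝ), ∀ y : ℝ, GLd h y =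
      ∑' k : ℤ, ω k * ((h : ℂ)) ^ (Complex.I * (k : ℂ) * (ctil : ℂ) - (α : ℂ)) *
        ∑' j : ℕ, gbinom ((α : ℂ) - Complex.I * (k : ℂ) * (ctil : ℂ)) j * (-1 : ℂ) ^ j *
          ((f (y - j * h) : ℝ) : ℂ)) :
    (α < 1 → ∀ᵐ x : ℝ, Tendsto (fun h : ℝ => GLd h x) (nhdsWithin 0 (Set.Ioi 0))
      (nhds (((∫ y, (f x - f (x - y)) ∂φ₁ : ℝ)) : ℂ))) ∧
    (1 < α → ∀ᵐ x : ℝ, Tendsto (fun h : ℝ => GLd h x) (nhdsWithin 0 (Set.Ioi 0))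
      (nhds (((∫ y, (f (x - y) - f x + y * deriv f x) ∂φ₁ : ℝ)) : ℂ))) := by
  obtain ⟨hα0, hα2⟩ := hα
  obtain ⟨⟨hθ0, -, -⟩, hθc, -, ⟨C, -, hC⟩, hs, hθs⟩ := hθ
  obtain ⟨M, hM⟩ := hfb
  set β : ℤ → ℝ := fun k => (k : ℝ) * ctil with hβ
  have hβk : ∀ k : ℤ, Complex.I * (k : ℂ) * (ctil : ℂ) = Complex.I * (β k : ℂ) := by
    intro k; simp [hβ, mul_assoc]
  have hθs' : ∀ x : ℝ, HasSum (fun k => cfs k * Complex.exp (Complex.I * (β k) * (x : ℂ)))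
      (θ x : ℂ) := by
    intro x
    have := hθs x
    rw [← hctil] at this
    simpa only [hβk] using this
  have hB : ∀ x, θ x ≤ ∑' k, ‖cfs k‖ := by
    intro x
    have h1 := tsum_of_norm_bounded hs.hasSum
      (f := fun k => cfs k * Complex.exp (Complex.I * (β k) * (x : ℂ))) (fun k => by
        rw [norm_mul, show Complex.I * (β k : ℂ) * (x : ℂ) = ((β k * x : ℝ) : ℂ) * Complex.I by
          push_cast; ring, Complex.norm_exp_ofReal_mul_I, mul_one])
    rw [(hθs' x).tsum_eq, Complex.norm_real, Real.norm_eq_abs] at h1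
    exact (le_abs_self _).trans h1
  have hαn : ∀ j : ℕ, α ≠ j := by
    intro j hj
    rcases j with _ | _ | j
    · simp at hj; linarith
    · simp at hj; exact hα1 hj
    · push_cast at hj
      linarith [(Nat.cast_nonneg j : (0 : ℝ) ≤ j)]
  have hpos : ∀ᵐ y ∂φ₁, 0 < y := by
    rw [ae_iff]
    simpa [Iic] using hφ0
  have hsε : ∀ ε : ℝ, 0 < ε → ε ≤ 1 → Summable fun k => ‖cfs k‖ * (1 + |β k|) ^ (1 - ε) :=
    fun ε h0 h1 => summable_cfs hC ctil h0 h1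
  have hGL : ∀ h > (0 : ℝ), ∀ x : ℝ, GLd h x = ∑' k : ℤ, cfs k *
      ((h : ℂ) ^ (-((α : ℂ) - Complex.I * β k)) * ((if α < 1 then 1 else -1) *
        (Complex.Gamma (1 - ((α : ℂ) - Complex.I * β k)) *
        ∑' j : ℕ, gbinom ((α : ℂ) - Complex.I * β k) j * (-1 : ℂ) ^ j *
          ((f (x - j * h) : ℝ) : ℂ)))) := by
    intro h hh x
    rw [hGLd h hh x]
    congr 1; ext k
    rw [hω k, hβk, show -((α : ℂ) - Complex.I * β k) = Complex.I * β k - α by ring,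
      show 1 - ((α : ℂ) - Complex.I * β k) = Complex.I * β k - α + 1 by ring]
    ring
  constructor
  · intro hlt
    refine Eventually.of_forall fun x => ?_
    have hf1 : ContDiff ℝ 1 f := hfd.of_le (by
      have : (0 : ℝ) < n := by linarith
      have : 1 ≤ n := by exact_mod_cast this
      exact_mod_cast this)
    obtain ⟨K, hK0, hK⟩ := taylor_one hM hf1 x
    obtain ⟨D, hD, hDb⟩ := exists_majorant_lt hlt hθ0 hθc hB hφ hφ0
    set a : ℝ → ℕ → ℝ := fun h j => f x - f (x - j * h) with ha
    have hab : ∀ h > 0, ∀ j : ℕ, |a h j| ≤ K ∧ |a h j| ≤ K * (j * h) := by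
      intro h hh j
      have h1 := hK (j * h) (by positivity)
      exact ⟨h1.trans (mul_le_of_le_one_right hK0 (min_le_left _ _)),
        h1.trans (mul_le_mul_of_nonneg_left (min_le_right _ _) hK0)⟩
    -- the Poisson representation of the difference
    have hid : ∀ h > 0, GLd h x = ((∫ y, ∑' j, pois (y / h) j * a h j ∂φ₁ : ℝ) : ℂ) := by
      intro h hh
      rw [integral_pois_tsum (m := 0) (by simpa using hα0) (by simpa using hlt) hθ0 hθc hB hφ hφ0
        hs hsε hθs' hh (a := a h) (K := K) (by simp [ha])
        (fun j => by simpa using (hab h hh j).1), hGL h hh x]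
      congr 1; ext k
      rw [if_pos hlt, one_mul, gl_mode_lt hα0 hαn (β k) (fun j => f (x - j * h)) (f x)]
    have hlim : Tendsto (fun h : ℝ => ∫ y, ∑' j, pois (y / h) j * a h j ∂φ₁)
        (nhdsWithin 0 (Ioi 0)) (nhds (∫ y, (f x - f (x - y)) ∂φ₁)) := by
      refine tendsto_integral_filter_of_dominated_convergence (fun y => K * D y) ?_ ?_
        (hD.const_mul K) ?_
      · filter_upwards [self_mem_nhdsWithin] with h hh
        refine aestronglyMeasurable_pois_tsum hpos (K := K) (fun j => ?_) hh
        exact (hab h hh j).1.trans (le_mul_of_one_le_right hK0 (by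
          linarith [(Nat.cast_nonneg j : (0 : ℝ) ≤ j)]))
      · filter_upwards [self_mem_nhdsWithin] with h hh
        filter_upwards [hpos] with y hy
        simp only [mem_Ioi] at hh
        have hp := pois_nonneg (div_nonneg hy.le hh.le)
        have h1 := tsum_of_norm_bounded ((pois_hasSum (y / h)).mul_left K)
          (f := fun j => pois (y / h) j * a h j) (fun j => by
            rw [norm_mul, Real.norm_of_nonneg (hp j), Real.norm_eq_abs, mul_comm]
            exact mul_le_mul_of_nonneg_right (hab h hh j).1 (hp j))
        have h2 := tsum_of_norm_bounded ((pois_hasSum_one (y / h)).mul_left (K * h))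
          (f := fun j => pois (y / h) j * a h j) (fun j => by
            rw [norm_mul, Real.norm_of_nonneg (hp j), Real.norm_eq_abs]
            have := mul_le_mul_of_nonneg_right (hab h hh j).2 (hp j)
            linarith)
        have e : K * h * (y / h) = K * y := by field_simp
        rw [e] at h2
        refine le_trans ?_ (mul_le_mul_of_nonneg_left (hDb y hy) hK0)
        rw [mul_min_of_nonneg _ _ hK0]
        exact le_min h1 h2
      · filter_upwards [hpos] with y hy
        refine szasz_tendsto (r := fun u => f x - f (x - u)) (K := K)
          (continuous_const.sub (hf1.continuous.comp (continuous_const.sub continuous_id)))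
          (fun u hu => ?_) hy
        refine (hK u hu).trans (mul_le_mul_of_nonneg_left ?_ hK0)
        exact (min_le_right _ _).trans (by linarith)
    refine ((Complex.continuous_ofReal.tendsto _).comp hlim).congr' ?_
    filter_upwards [self_mem_nhdsWithin] with h hh
    exact (hid h hh).symm
  · intro hgt
    refine Eventually.of_forall fun x => ?_
    have hf2 : ContDiff ℝ 2 f := hfd.of_le (by
      have : (2 : ℝ) < n := by linarith
      have : 2 ≤ n := by exact_mod_cast this.le
      exact_mod_cast this)
    obtain ⟨K, hK0, hK⟩ := taylor_two hM hf2 x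
    obtain ⟨D, hD, hDb⟩ := exists_majorant_gt hgt hα2 hθ0 hθc hB hφ hφ0
    set r : ℝ → ℝ := fun u => f (x - u) - f x + u * deriv f x with hr
    -- the discrete slope `(f x - f (x - h)) / h` makes `a h 1` vanish, so that only indices
    -- `2 ≤ j`, where `φ₁` integrates the Poisson weight, contribute
    set a : ℝ → ℕ → ℝ := fun h j => f (x - j * h) - f x + j * (f x - f (x - h)) with ha
    have har : ∀ h j, a h j = r (j * h) - j * r h := by
      intro h j; simp only [ha, hr]; ring
    have ha0 : ∀ h, ∀ j ≤ 1, a h j = 0 := by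
      intro h j hj
      interval_cases j <;> simp [ha]
    have hab : ∀ h > 0, ∀ j : ℕ, |a h j| ≤ 2 * K * h * j ∧
        |a h j| ≤ 4 * K * h ^ 2 * (j * (j - 1)) := by
      intro h hh j
      rcases le_or_gt j 1 with hj | hj
      · rw [ha0 h j hj]
        interval_cases j <;> simp <;> positivity
      · have hj2 : (2 : ℝ) ≤ j := by exact_mod_cast hj
        have h1 := hK (j * h) (by positivity)
        have h2 := hK h hh.le
        have h3 : |a h j| ≤ |r (j * h)| + j * |r h| := by
          rw [har]
          refine (abs_sub _ _).trans (le_of_eq ?_)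
          rw [abs_mul, Nat.abs_cast]
        constructor
        · have := mul_le_mul_of_nonneg_left h2.1 (Nat.cast_nonneg (α := ℝ) j)
          simp only [hr] at h3
          linarith [h1.1]
        · have h4 := mul_le_mul_of_nonneg_left h2.2 (Nat.cast_nonneg (α := ℝ) j)
          simp only [hr] at h3
          have h5 : |a h j| ≤ K * h ^ 2 * (j ^ 2 + j) := by
            simp only [ha]
            linarith [h1.2]
          refine h5.trans ?_
          have h6 : (j : ℝ) ^ 2 + j ≤ 4 * (j * (j - 1)) := by nlinarith
          calc _ ≤ K * h ^ 2 * (4 * (j * (j - 1))) := by gcongr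
            _ = _ := by ring
    have hab1 : ∀ h > 0, ∀ j : ℕ, |a h j| ≤ 2 * K * h * (j + 1) := by
      intro h hh j
      have : 0 ≤ 2 * K * h := by positivity
      linarith [(hab h hh j).1]
    have hid : ∀ h > 0, GLd h x = ((∫ y, ∑' j, pois (y / h) j * a h j ∂φ₁ : ℝ) : ℂ) := by
      intro h hh
      rw [integral_pois_tsum (m := 1) (by simpa using hgt) (by norm_num; exact hα2) hθ0 hθc hB hφ
        hφ0 hs hsε hθs' hh (a := a h) (K := 2 * K * h) (ha0 h)
        (fun j => by simpa using hab1 h hh j), hGL h hh x]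
      congr 1; ext k
      rw [if_neg (not_lt.2 hgt.le), neg_one_mul,
        gl_mode_gt hgt hαn (β k) (fun j => f (x - j * h)) (f x) (f x - f (x - h))]
    have hlim : Tendsto (fun h : ℝ => ∫ y, ∑' j, pois (y / h) j * a h j ∂φ₁)
        (nhdsWithin 0 (Ioi 0)) (nhds (∫ y, r y ∂φ₁)) := by
      refine tendsto_integral_filter_of_dominated_convergence (fun y => 4 * K * D y) ?_ ?_
        (hD.const_mul (4 * K)) ?_
      · filter_upwards [self_mem_nhdsWithin] with h hh
        exact aestronglyMeasurable_pois_tsum hpos (hab1 h hh) hh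
      · filter_upwards [self_mem_nhdsWithin] with h hh
        filter_upwards [hpos] with y hy
        simp only [mem_Ioi] at hh
        have hp := pois_nonneg (div_nonneg hy.le hh.le)
        have h1 := tsum_of_norm_bounded ((pois_hasSum_one (y / h)).mul_left (2 * K * h))
          (f := fun j => pois (y / h) j * a h j) (fun j => by
            rw [norm_mul, Real.norm_of_nonneg (hp j), Real.norm_eq_abs]
            have := mul_le_mul_of_nonneg_right (hab h hh j).1 (hp j)
            linarith)
        have h2 := tsum_of_norm_bounded ((pois_hasSum_two (y / h)).mul_left (4 * K * h ^ 2))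
          (f := fun j => pois (y / h) j * a h j) (fun j => by
            rw [norm_mul, Real.norm_of_nonneg (hp j), Real.norm_eq_abs]
            have := mul_le_mul_of_nonneg_right (hab h hh j).2 (hp j)
            linarith)
        have e1 : 2 * K * h * (y / h) = 2 * K * y := by field_simp
        have e2 : 4 * K * h ^ 2 * (y / h) ^ 2 = 4 * K * y ^ 2 := by field_simp
        rw [e1] at h1
        rw [e2] at h2
        have hK4 : 0 ≤ 4 * K := by positivity
        refine le_trans ?_ (mul_le_mul_of_nonneg_left (hDb y hy) hK4)
        rw [mul_min_of_nonneg _ _ hK4]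
        refine le_min (h1.trans ?_) h2
        have : 0 ≤ K * y := by positivity
        linarith
      · filter_upwards [hpos] with y hy
        have hrK : ∀ u, 0 ≤ u → |r u| ≤ K * (1 + u) := fun u hu =>
          (hK u hu).1.trans (by linarith)
        have hrc : Continuous r :=
          ((hf2.continuous.comp (continuous_const.sub continuous_id)).sub continuous_const).add
            (continuous_id.mul continuous_const)
        -- the discrete slope contributes `(y / h) r(h) = O(h)`
        have t1 := szasz_tendsto hrc hrK hy
        have t2 : Tendsto (fun h : ℝ => y / h * r h) (nhdsWithin 0 (Ioi 0)) (nhds 0) := by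
          have t3 : Tendsto (fun h : ℝ => y * K * h) (nhdsWithin 0 (Ioi 0)) (nhds 0) := by
            have : Tendsto (fun h : ℝ => y * K * h) (nhds 0) (nhds (y * K * 0)) :=
              (continuous_const.mul continuous_id).tendsto 0
            rw [mul_zero] at this
            exact this.mono_left nhdsWithin_le_nhds
          refine squeeze_zero_norm' ?_ t3
          filter_upwards [self_mem_nhdsWithin] with h hh
          simp only [mem_Ioi] at hh
          rw [norm_mul, Real.norm_of_nonneg (by positivity), Real.norm_eq_abs]
          calc y / h * |r h| ≤ y / h * (K * h ^ 2) := by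
                gcongr
                exact (hK h hh.le).2
            _ = _ := by field_simp
        have t4 := t1.sub t2
        rw [sub_zero] at t4
        refine t4.congr' ?_
        filter_upwards [self_mem_nhdsWithin] with h hh
        simp only [mem_Ioi] at hh
        have s1 : Summable fun j : ℕ => pois (y / h) j * r (j * h) := by
          refine summable_mul_pois (K := K * (1 + h)) (fun j => ?_) (div_nonneg hy.le hh.le)
          refine (hrK (j * h) (by positivity)).trans ?_
          have hj : (0 : ℝ) ≤ j := Nat.cast_nonneg j
          have : K * (1 + j * h) ≤ K * ((1 + h) * (j + 1)) := by
            gcongr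
            nlinarith
          linarith
        have s2 := (pois_hasSum_one (y / h)).mul_right (r h)
        rw [← (s1.hasSum.sub s2).tsum_eq]
        congr 1; ext j
        rw [har]; ring
    refine ((Complex.continuous_ofReal.tendsto _).comp hlim).congr' ?_
    filter_upwards [self_mem_nhdsWithin] with h hh
    exact (hid h hh).symm
end
end
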